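/- Let Γ be a 3-edge connected metric graph with canonical model (G₀, l₀) with |V(G₀)| > 3, and let D ∈ W¹₃(Γ). Then for every x ∈ V(G₀) there exists y ∈ V(G₀) such that the admissible representatives D_x and D_y of D are consecutive: there is an edge (of the refinement G_D of G₀ obtained by inserting vertices at all points in supports of admissible representatives of D) with one endpoint in Supp(D_x) and the other in Supp(D_y). -/

import Mathlib

open scoped Classical

/-!
Combinatorial models of metric graphs: a finite (multi-)graph together with a
positive length for each edge.  A metric graph is determined by such a model;
its canonical model is the (unique) model with all valences at least `3`.
-/

structure MetricGraphModel : Type 1 where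
  V : Type
  E : Type
  fV : Fintype V
  fE : Fintype E
  dV : DecidableEq V
  dE : DecidableEq E
  src : E → V
  tgt : E → V
  len : E → ℝ
  len_pos : ∀ e, 0 < len e

attribute [instance] MetricGraphModel.fV MetricGraphModel.fE
attribute [instance] MetricGraphModel.dV MetricGraphModel.dE

namespace MetricGraphModel

/-- An edge is incident to a vertex. -/
def Incident (Γ : MetricGraphModel) (e : Γ.E) (v : Γ.V) : Prop :=
  Γ.src e = v ∨ Γ.tgt e = v

/-- Incidence multiplicity (a loop counts twice). -/
def incid (Γ : MetricGraphModel) (e : Γ.E) (v : Γ.V) : ℕ :=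
  (if Γ.src e = v then 1 else 0) + (if Γ.tgt e = v then 1 else 0)

/-- The valence of a vertex. -/
def valence (Γ : MetricGraphModel) (v : Γ.V) : ℕ := ∑ e : Γ.E, Γ.incid e v

def dSrc (Γ : MetricGraphModel) (x : Γ.E × Bool) : Γ.V :=
  if x.2 then Γ.src x.1 else Γ.tgt x.1

def dTgt (Γ : MetricGraphModel) (x : Γ.E × Bool) : Γ.V :=
  if x.2 then Γ.tgt x.1 else Γ.src x.1

/-- Walks, given as lists of oriented edges. -/
def IsWalk (Γ : MetricGraphModel) : List (Γ.E × Bool) → Γ.V → Γ.V → Prop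
  | [], u, v => u = v
  | x :: xs, u, v => Γ.dSrc x = u ∧ IsWalk Γ xs (Γ.dTgt x) v

def Connected (Γ : MetricGraphModel) : Prop :=
  Nonempty Γ.V ∧ ∀ u v : Γ.V, ∃ L, IsWalk Γ L u v

/-- Removing any set of at most `2` edges leaves the graph connected. -/
def ThreeEdgeConnected (Γ : MetricGraphModel) : Prop :=
  ∀ S : Finset Γ.E, S.card ≤ 2 → ∀ u v : Γ.V,
    ∃ L, IsWalk Γ L u v ∧ ∀ x ∈ L, x.1 ∉ S

def Loopless (Γ : MetricGraphModel) : Prop := ∀ e : Γ.E, Γ.src e ≠ Γ.tgt e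

/-- A canonical model: connected, with all valences at least `3`. -/
def IsCanonical (Γ : MetricGraphModel) : Prop :=
  Γ.Connected ∧ ∀ v : Γ.V, 3 ≤ Γ.valence v

/-- A (model of a) metric tree. -/
def IsTreeModel (Γ : MetricGraphModel) : Prop :=
  Γ.Connected ∧ Fintype.card Γ.E + 1 = Fintype.card Γ.V

/-- Points of the associated metric graph: vertices together with interior
points of edges (parametrised by their distance from the source). -/
abbrev Pt (Γ : MetricGraphModel) : Type :=
  Γ.V ⊕ Σ e : Γ.E, {t : ℝ // 0 < t ∧ t < Γ.len e}

end MetricGraphModel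

open MetricGraphModel

/-- The (canonical) loopless model: insert a vertex at the midpoint of every loop. -/
noncomputable def looplessModel (Γ : MetricGraphModel) : MetricGraphModel where
  V := Γ.V ⊕ {e : Γ.E // Γ.src e = Γ.tgt e}
  E := {e : Γ.E // Γ.src e ≠ Γ.tgt e} ⊕ ({e : Γ.E // Γ.src e = Γ.tgt e} × Bool)
  fV := inferInstance
  fE := inferInstance
  dV := inferInstance
  dE := inferInstance
  src := fun x => match x with
    | Sum.inl e => Sum.inl (Γ.src e.1)
    | Sum.inr p => Sum.inl (Γ.src p.1.1)
  tgt := fun x => match x with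
    | Sum.inl e => Sum.inl (Γ.tgt e.1)
    | Sum.inr p => Sum.inr p.1
  len := fun x => match x with
    | Sum.inl e => Γ.len e.1
    | Sum.inr p => Γ.len p.1.1 / 2
  len_pos := by
    rintro (e | p)
    · exact Γ.len_pos e.1
    · have h := Γ.len_pos p.1.1
      show 0 < Γ.len p.1.1 / 2
      linarith

/-- The metric subgraph obtained by removing all loops. -/
noncomputable def deloop (Γ : MetricGraphModel) : MetricGraphModel where
  V := Γ.V
  E := {e : Γ.E // Γ.src e ≠ Γ.tgt e}
  fV := inferInstance
  fE := inferInstance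
  dV := inferInstance
  dE := inferInstance
  src := fun e => Γ.src e.1
  tgt := fun e => Γ.tgt e.1
  len := fun e => Γ.len e.1
  len_pos := fun e => Γ.len_pos e.1

namespace MetricGraphModel

/-! ### Divisors and rational functions -/

abbrev Divisor (Γ : MetricGraphModel) : Type := Γ.Pt → ℤ

noncomputable def divDegree {Γ : MetricGraphModel} (D : Divisor Γ) : ℤ := finsum D

def DivEffective {Γ : MetricGraphModel} (D : Divisor Γ) : Prop := ∀ p, 0 ≤ D p

def DivFinSupp {Γ : MetricGraphModel} (D : Divisor Γ) : Prop :=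
  (Function.support D).Finite

noncomputable def unitDiv (Γ : MetricGraphModel) (p : Γ.Pt) : Divisor Γ :=
  fun q => if q = p then 1 else 0

/-- `f` is continuous piecewise linear with integer slopes on `[0, L]`. -/
def PLInt (f : ℝ → ℝ) (L : ℝ) : Prop :=
  ∃ n : ℕ, ∃ t : Fin (n + 1) → ℝ, t 0 = 0 ∧ t (Fin.last n) = L ∧ StrictMono t ∧
    ∀ i : Fin n, ∃ m : ℤ, ∀ s ∈ Set.Icc (t i.castSucc) (t i.succ),
      f s = f (t i.castSucc) + (m : ℝ) * (s - t i.castSucc)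

/-- The (integer) outgoing slope of `f` to the right of `t0`. -/
noncomputable def slopeR (f : ℝ → ℝ) (t0 : ℝ) : ℤ :=
  if h : ∃ m : ℤ, ∃ ε : ℝ, 0 < ε ∧ ∀ s ∈ Set.Icc t0 (t0 + ε),
      f s = f t0 + (m : ℝ) * (s - t0)
  then h.choose else 0

/-- The (integer) outgoing slope of `f` to the left of `t0`. -/
noncomputable def slopeL (f : ℝ → ℝ) (t0 : ℝ) : ℤ :=
  if h : ∃ m : ℤ, ∃ ε : ℝ, 0 < ε ∧ ∀ s ∈ Set.Icc (t0 - ε) t0,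
      f s = f t0 + (m : ℝ) * (t0 - s)
  then h.choose else 0

/-- A rational function: continuous, piecewise linear with integer slopes. -/
structure RationalFunction (Γ : MetricGraphModel) where
  vVal : Γ.V → ℝ
  eFun : Γ.E → ℝ → ℝ
  pl : ∀ e, PLInt (eFun e) (Γ.len e)
  srcVal : ∀ e, eFun e 0 = vVal (Γ.src e)
  tgtVal : ∀ e, eFun e (Γ.len e) = vVal (Γ.tgt e)

/-- The principal divisor of a rational function: the sum of the outgoing
slopes at every point. -/
noncomputable def ratDiv {Γ : MetricGraphModel} (f : RationalFunction Γ) : Divisor Γ :=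
  fun p => match p with
  | Sum.inl v => ∑ e : Γ.E,
      ((if Γ.src e = v then slopeR (f.eFun e) 0 else 0) +
       (if Γ.tgt e = v then slopeL (f.eFun e) (Γ.len e) else 0))
  | Sum.inr q => slopeR (f.eFun q.1) q.2.1 + slopeL (f.eFun q.1) q.2.1

/-- Evaluation of a rational function at a point of the metric graph. -/
def ratEval {Γ : MetricGraphModel} (f : RationalFunction Γ) : Γ.Pt → ℝ
  | Sum.inl v => f.vVal v
  | Sum.inr q => f.eFun q.1 q.2.1

/-- Linear equivalence of divisors. -/
def LinEquiv (Γ : MetricGraphModel) (D D' : Divisor Γ) : Prop :=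
  ∃ f : RationalFunction Γ, ∀ p, D p = D' p + ratDiv f p

/-- The Baker–Norine rank of `D` is at least `k`. -/
def RankGE (Γ : MetricGraphModel) (D : Divisor Γ) (k : ℕ) : Prop :=
  ∀ A : Divisor Γ, DivEffective A → DivFinSupp A → divDegree A = (k : ℤ) →
    ∃ B : Divisor Γ, DivEffective B ∧ DivFinSupp B ∧
      LinEquiv Γ (fun p => D p - A p) B

/-- `W¹₃(Γ) ≠ ∅`: some divisor of degree `3` has rank at least `1`. -/
def DivisoriallyTrigonal (Γ : MetricGraphModel) : Prop :=
  ∃ D : Divisor Γ, DivFinSupp D ∧ divDegree D = 3 ∧ RankGE Γ D 1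

end MetricGraphModel

/-! ### Harmonic morphisms of metric graphs -/

/-- An indexed morphism of metric graph models.  An edge is either mapped onto
an edge (with an integer stretching index `mu`) or contracted to a vertex. -/
structure MGMorphism (Γ Δ : MetricGraphModel) where
  vMap : Γ.V → Δ.V
  eMap : Γ.E → Δ.E ⊕ Δ.V
  mu : Γ.E → ℕ
  mu_zero : ∀ e, mu e = 0 ↔ ∃ v', eMap e = Sum.inr v'
  contract_ok : ∀ e v', eMap e = Sum.inr v' →
    vMap (Γ.src e) = v' ∧ vMap (Γ.tgt e) = v'
  edge_ok : ∀ e e', eMap e = Sum.inl e' →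
    ((vMap (Γ.src e) = Δ.src e' ∧ vMap (Γ.tgt e) = Δ.tgt e') ∨
     (vMap (Γ.src e) = Δ.tgt e' ∧ vMap (Γ.tgt e) = Δ.src e'))
  len_ok : ∀ e e', eMap e = Sum.inl e' → (mu e : ℝ) * Γ.len e = Δ.len e'

namespace MGMorphism

variable {Γ Δ : MetricGraphModel}

/-- The local sum `m_φ(v)` computed along a fixed edge `e'` at `φ(v)`. -/
noncomputable def locDeg (φ : MGMorphism Γ Δ) (v : Γ.V) (e' : Δ.E) : ℕ :=
  ∑ e : Γ.E, if φ.eMap e = Sum.inl e' then φ.mu e * Γ.incid e v else 0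

def Harmonic (φ : MGMorphism Γ Δ) : Prop :=
  ∀ (v : Γ.V) (e₁ e₂ : Δ.E),
    Δ.Incident e₁ (φ.vMap v) → Δ.Incident e₂ (φ.vMap v) →
      locDeg φ v e₁ = locDeg φ v e₂

def Nondegenerate (φ : MGMorphism Γ Δ) : Prop :=
  ∀ v : Γ.V, ∃ e' : Δ.E, Δ.Incident e' (φ.vMap v) ∧ 1 ≤ locDeg φ v e'

def HasDegree (φ : MGMorphism Γ Δ) (d : ℕ) : Prop :=
  ∀ e' : Δ.E, (∑ e : Γ.E, if φ.eMap e = Sum.inl e' then φ.mu e else 0) = d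

/-- The horizontal multiplicity `m_φ(v)` at a vertex. -/
noncomputable def mVal (φ : MGMorphism Γ Δ) (v : Γ.V) : ℕ :=
  (Finset.univ.filter fun e' : Δ.E => Δ.Incident e' (φ.vMap v)).sup (locDeg φ v)

end MGMorphism

/-! ### Isomorphisms, subdivisions and tropical modifications -/

def sameEndsMap (Γ Δ : MetricGraphModel) (f : Γ.V → Δ.V) (e : Γ.E) (e' : Δ.E) : Prop :=
  (f (Γ.src e) = Δ.src e' ∧ f (Γ.tgt e) = Δ.tgt e') ∨
  (f (Γ.src e) = Δ.tgt e' ∧ f (Γ.tgt e) = Δ.src e')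

structure MGMIso (Γ Δ : MetricGraphModel) where
  vEquiv : Γ.V ≃ Δ.V
  eEquiv : Γ.E ≃ Δ.E
  ends : ∀ e, sameEndsMap Γ Δ (fun v => vEquiv v) e (eEquiv e)
  len_eq : ∀ e, Δ.len (eEquiv e) = Γ.len e

/-- Deletion of a leaf (a valence-one vertex together with its edge). -/
def LeafDeletion (Δ Δ' : MetricGraphModel) : Prop :=
  ∃ (v₀ : Δ.V) (e₀ : Δ.E), Δ.valence v₀ = 1 ∧ Δ.Incident e₀ v₀ ∧
    ∃ (fv : Δ'.V ≃ {v : Δ.V // v ≠ v₀}) (fe : Δ'.E ≃ {e : Δ.E // e ≠ e₀}),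
      (∀ e : Δ'.E, sameEndsMap Δ' Δ (fun v => (fv v).1) e (fe e).1) ∧
      ∀ e : Δ'.E, Δ.len (fe e).1 = Δ'.len e

/-- Suppression of a valence-two vertex, merging its two edges and adding
their lengths. -/
def SeriesReduction (Δ Δ' : MetricGraphModel) : Prop :=
  ∃ (v₀ : Δ.V) (e₁ e₂ : Δ.E) (u₁ u₂ : Δ.V),
    e₁ ≠ e₂ ∧ Δ.valence v₀ = 2 ∧ u₁ ≠ v₀ ∧ u₂ ≠ v₀ ∧
    ({Δ.src e₁, Δ.tgt e₁} : Set Δ.V) = {v₀, u₁} ∧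
    ({Δ.src e₂, Δ.tgt e₂} : Set Δ.V) = {v₀, u₂} ∧
    ∃ (fv : Δ'.V ≃ {v : Δ.V // v ≠ v₀}) (ebar : Δ'.E)
      (fe : {e : Δ'.E // e ≠ ebar} ≃ {e : Δ.E // e ≠ e₁ ∧ e ≠ e₂}),
      Δ'.len ebar = Δ.len e₁ + Δ.len e₂ ∧
      ({(fv (Δ'.src ebar)).1, (fv (Δ'.tgt ebar)).1} : Set Δ.V) = {u₁, u₂} ∧
      (∀ e : {e : Δ'.E // e ≠ ebar},
        sameEndsMap Δ' Δ (fun v => (fv v).1) e.1 (fe e).1) ∧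
      ∀ e : {e : Δ'.E // e ≠ ebar}, Δ.len (fe e).1 = Δ'.len e.1

def ReductionStep (Δ Δ' : MetricGraphModel) : Prop :=
  LeafDeletion Δ Δ' ∨ SeriesReduction Δ Δ' ∨ Nonempty (MGMIso Δ Δ')

/-- `Δ` reduces to `Γ` by deleting leaves and suppressing valence-two
vertices.  When `Γ` is a canonical model, this says exactly that the metric
graph of `Δ` is a tropical modification of the metric graph of `Γ`. -/
def Reduces (Δ Γ : MetricGraphModel) : Prop :=
  Relation.ReflTransGen ReductionStep Δ Γ

def IsTropicalModificationOf (Δ Γ : MetricGraphModel) : Prop := Reduces Δ Γ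

def ModelStep (Δ Δ' : MetricGraphModel) : Prop :=
  SeriesReduction Δ Δ' ∨ Nonempty (MGMIso Δ Δ')

/-- `Δ` and `Γ` are models of the same metric graph (no trees added). -/
def SameMetricGraph (Δ Γ : MetricGraphModel) : Prop :=
  Relation.ReflTransGen ModelStep Δ Γ

/-- `Γ` is trigonal: a tropical modification of `Γ` admits a non-degenerate
harmonic morphism of degree `3` onto a metric tree. -/
def Trigonal (Γ : MetricGraphModel) : Prop :=
  ∃ Δ T : MetricGraphModel, IsTropicalModificationOf Δ Γ ∧ T.IsTreeModel ∧
    ∃ φ : MGMorphism Δ T,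
      MGMorphism.Harmonic φ ∧ MGMorphism.Nondegenerate φ ∧ MGMorphism.HasDegree φ 3

/-- `Γ` is strictly trigonal: `Γ` itself (i.e. some model of the same metric
graph) admits a non-degenerate harmonic morphism of degree `3` onto a metric
tree. -/
def StrictlyTrigonal (Γ : MetricGraphModel) : Prop :=
  ∃ Δ T : MetricGraphModel, SameMetricGraph Δ Γ ∧ T.IsTreeModel ∧
    ∃ φ : MGMorphism Δ T,
      MGMorphism.Harmonic φ ∧ MGMorphism.Nondegenerate φ ∧ MGMorphism.HasDegree φ 3

/-! ### Embeddings up to subdivision (for tropical modifications of morphisms) -/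

structure SubEmbed (G Δ : MetricGraphModel) where
  v : G.V → Δ.V
  inj : Function.Injective v
  path : G.E → List (Δ.E × Bool)
  ne : ∀ e, path e ≠ []
  walk : ∀ e, MetricGraphModel.IsWalk Δ (path e) (v (G.src e)) (v (G.tgt e))
  len_sum : ∀ e, ((path e).map fun x => Δ.len x.1).sum = G.len e

/-! ### Pullback of points along a harmonic morphism -/

/-- `φ` maps the point `p` of `Γ` to the point `t` of `Δ`. -/
def MapsToPt {Γ Δ : MetricGraphModel} (φ : MGMorphism Γ Δ) : Γ.Pt → Δ.Pt → Prop
  | Sum.inl v, Sum.inl t => φ.vMap v = t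
  | Sum.inl _, Sum.inr _ => False
  | Sum.inr q, Sum.inl t => φ.eMap q.1 = Sum.inr t
  | Sum.inr q, Sum.inr r =>
      φ.eMap q.1 = Sum.inl r.1 ∧
      ((φ.vMap (Γ.src q.1) = Δ.src r.1 ∧ (r.2.1 : ℝ) = (φ.mu q.1 : ℝ) * (q.2.1 : ℝ)) ∨
       (φ.vMap (Γ.src q.1) = Δ.tgt r.1 ∧
         (r.2.1 : ℝ) = Δ.len r.1 - (φ.mu q.1 : ℝ) * (q.2.1 : ℝ)))

/-- Horizontal multiplicity of a point. -/
noncomputable def hmult {Γ Δ : MetricGraphModel} (φ : MGMorphism Γ Δ) : Γ.Pt → ℕ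
  | Sum.inl v => MGMorphism.mVal φ v
  | Sum.inr q => φ.mu q.1

/-- The pullback divisor `φ*(t)` of a point `t`. -/
noncomputable def pullbackDiv {Γ Δ : MetricGraphModel} (φ : MGMorphism Γ Δ)
    (t : Δ.Pt) : MetricGraphModel.Divisor Γ :=
  fun p => if MapsToPt φ p t then (hmult φ p : ℤ) else 0

/-! ### Points on edges, admissible representatives, consecutive divisors -/

open MetricGraphModel

/-- `p` is an interior point of the edge `e`. -/
def interiorOf (Γ : MetricGraphModel) (e : Γ.E) (p : Γ.Pt) : Prop :=
  ∃ q : {t : ℝ // 0 < t ∧ t < Γ.len e}, p = Sum.inr ⟨e, q⟩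

def SameEdgeInterior (Γ : MetricGraphModel) (p q : Γ.Pt) : Prop :=
  ∃ e : Γ.E, interiorOf Γ e p ∧ interiorOf Γ e q

/-- `Dx` is the admissible representative of `D` with respect to the vertex
`x`: it is linearly equivalent to `D`, of the form `x + x₁ + x₂`, and `x₁, x₂`
do not both lie in the interior of one edge. -/
def AdmissibleRep (Γ : MetricGraphModel) (D : Divisor Γ) (x : Γ.V)
    (Dx : Divisor Γ) : Prop :=
  LinEquiv Γ D Dx ∧
  ∃ p q : Γ.Pt,
    Dx = (fun z => unitDiv Γ (Sum.inl x) z + unitDiv Γ p z + unitDiv Γ q z) ∧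
    ¬ SameEdgeInterior Γ p q

/-- `p` lies on the (closed) edge `e` at distance `s` from its source. -/
def LiesOn (Γ : MetricGraphModel) (e : Γ.E) (p : Γ.Pt) (s : ℝ) : Prop :=
  (p = Sum.inl (Γ.src e) ∧ s = 0) ∨ (p = Sum.inl (Γ.tgt e) ∧ s = Γ.len e) ∨
  (∃ h : 0 < s ∧ s < Γ.len e, p = Sum.inr ⟨e, ⟨s, h⟩⟩)

/-- Vertices of the refinement `G_D`: vertices of `G₀` together with all
support points of admissible representatives of `D`. -/
def SpecialPt (Γ : MetricGraphModel) (D : Divisor Γ) (p : Γ.Pt) : Prop :=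
  (∃ v : Γ.V, p = Sum.inl v) ∨
  ∃ (x : Γ.V) (Dx : Divisor Γ), AdmissibleRep Γ D x Dx ∧ Dx p ≠ 0

/-- An edge of the refinement `G_D` joining the supports of `Dx` and `Dy`:
a segment of an edge of `Γ` between a point of `Supp Dx` and a point of
`Supp Dy` containing no vertex of `G_D` in its interior. -/
def ConnSeg (Γ : MetricGraphModel) (D Dx Dy : Divisor Γ) (e : Γ.E) (s t : ℝ) : Prop :=
  s < t ∧ ∃ p q : Γ.Pt, LiesOn Γ e p s ∧ LiesOn Γ e q t ∧
    ((Dx p ≠ 0 ∧ Dy q ≠ 0) ∨ (Dy p ≠ 0 ∧ Dx q ≠ 0)) ∧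
    ∀ r, s < r → r < t → ∀ z, LiesOn Γ e z r → ¬ SpecialPt Γ D z

/-- Two admissible representatives are consecutive. -/
def Consecutive (Γ : MetricGraphModel) (D Dx Dy : Divisor Γ) : Prop :=
  Dx ≠ Dy ∧ ∃ e s t, ConnSeg Γ D Dx Dy e s t

/-- The open segment of `e` between parameters `s` and `t`, as a set of points. -/
def segSet (Γ : MetricGraphModel) (e : Γ.E) (s t : ℝ) : Set Γ.Pt :=
  {z | ∃ r, s < r ∧ r < t ∧ LiesOn Γ e z r}

/-- Two points can be joined inside one edge avoiding the removed set `R`. -/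
def AvoidAdj (Γ : MetricGraphModel) (R : Set Γ.Pt) (p q : Γ.Pt) : Prop :=
  ∃ (e : Γ.E) (s t : ℝ), s ≤ t ∧
    ((LiesOn Γ e p s ∧ LiesOn Γ e q t) ∨ (LiesOn Γ e q s ∧ LiesOn Γ e p t)) ∧
    ∀ r, s < r → r < t → ∀ z, LiesOn Γ e z r → z ∉ R

/-- The complement of `R` in the metric graph is connected. -/
def ComplementConnected (Γ : MetricGraphModel) (R : Set Γ.Pt) : Prop :=
  ∀ p q : Γ.Pt, p ∉ R → q ∉ R →
    Relation.ReflTransGen (fun a b => a ∉ R ∧ b ∉ R ∧ AvoidAdj Γ R a b) p q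

/-! ### Minimizing/maximizing sets of a rational function -/

def minSet {Γ : MetricGraphModel} (f : RationalFunction Γ) : Set Γ.Pt :=
  {p | ∀ q, ratEval f p ≤ ratEval f q}

def maxSet {Γ : MetricGraphModel} (f : RationalFunction Γ) : Set Γ.Pt :=
  {p | ∀ q, ratEval f q ≤ ratEval f p}

/-- `p` is a boundary point of `A`: it belongs to `A` and there are points of
the complement arbitrarily close to it along some edge. -/
def InBoundary (Γ : MetricGraphModel) (A : Set Γ.Pt) (p : Γ.Pt) : Prop :=
  p ∈ A ∧ ∃ (e : Γ.E) (s : ℝ), LiesOn Γ e p s ∧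
    ∀ ε : ℝ, 0 < ε → ∃ r z, |r - s| < ε ∧ LiesOn Γ e z r ∧ z ∉ A

/-- There is an edge leaving `A` at `p`, in the direction of `e` at parameter
`s` (increasing if `b = true`, decreasing if `b = false`). -/
def ExitsAt (Γ : MetricGraphModel) (A : Set Γ.Pt) (p : Γ.Pt) (e : Γ.E)
    (s : ℝ) (b : Bool) : Prop :=
  LiesOn Γ e p s ∧
  (b = true → ∃ ε : ℝ, 0 < ε ∧ s + ε ≤ Γ.len e ∧
    ∀ r, s < r → r < s + ε → ∀ z, LiesOn Γ e z r → z ∉ A) ∧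
  (b = false → ∃ ε : ℝ, 0 < ε ∧ 0 ≤ s - ε ∧
    ∀ r, s - ε < r → r < s → ∀ z, LiesOn Γ e z r → z ∉ A)

/-! ### Helper lemmas: slopes and piecewise linear functions -/

def HasR (f : ℝ → ℝ) (a : ℝ) (m : ℤ) : Prop :=
  ∃ ε : ℝ, 0 < ε ∧ ∀ s ∈ Set.Icc a (a + ε), f s = f a + (m : ℝ) * (s - a)

def HasL (f : ℝ → ℝ) (a : ℝ) (m : ℤ) : Prop :=
  ∃ ε : ℝ, 0 < ε ∧ ∀ s ∈ Set.Icc (a - ε) a, f s = f a + (m : ℝ) * (a - s)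

lemma slopeR_of_hasR {f : ℝ → ℝ} {a : ℝ} {m : ℤ} (h : HasR f a m) : slopeR f a = m := by
  have hx : ∃ m : ℤ, ∃ ε : ℝ, 0 < ε ∧ ∀ s ∈ Set.Icc a (a + ε),
      f s = f a + (m : ℝ) * (s - a) := ⟨m, h⟩
  unfold slopeR
  rw [dif_pos hx]
  obtain ⟨ε', h1, h2⟩ := hx.choose_spec
  obtain ⟨ε, h3, h4⟩ := h
  have hp : 0 < min ε ε' := lt_min h3 h1
  have e1 := h2 (a + min ε ε') ⟨by linarith, by linarith [min_le_right ε ε']⟩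
  have e2 := h4 (a + min ε ε') ⟨by linarith, by linarith [min_le_left ε ε']⟩
  have e3 : ((hx.choose : ℤ) : ℝ) * min ε ε' = (m : ℝ) * min ε ε' := by
    have : a + min ε ε' - a = min ε ε' := by ring
    rw [this] at e1 e2
    linarith
  exact_mod_cast mul_right_cancel₀ hp.ne' e3

lemma slopeL_of_hasL {f : ℝ → ℝ} {a : ℝ} {m : ℤ} (h : HasL f a m) : slopeL f a = m := by
  have hx : ∃ m : ℤ, ∃ ε : ℝ, 0 < ε ∧ ∀ s ∈ Set.Icc (a - ε) a,
      f s = f a + (m : ℝ) * (a - s) := ⟨m, h⟩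
  unfold slopeL
  rw [dif_pos hx]
  obtain ⟨ε', h1, h2⟩ := hx.choose_spec
  obtain ⟨ε, h3, h4⟩ := h
  have hp : 0 < min ε ε' := lt_min h3 h1
  have e1 := h2 (a - min ε ε') ⟨by linarith [min_le_right ε ε'], by linarith⟩
  have e2 := h4 (a - min ε ε') ⟨by linarith [min_le_left ε ε'], by linarith⟩
  have e3 : ((hx.choose : ℤ) : ℝ) * min ε ε' = (m : ℝ) * min ε ε' := by
    have : a - (a - min ε ε') = min ε ε' := by ring
    rw [this] at e1 e2
    linarith
  exact_mod_cast mul_right_cancel₀ hp.ne' e3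

lemma HasR.comb {f g : ℝ → ℝ} {a : ℝ} {m l : ℤ} (k : ℤ) (hf : HasR f a m) (hg : HasR g a l) :
    HasR (fun s => f s + k * g s) a (m + k * l) := by
  obtain ⟨ε, h1, h2⟩ := hf
  obtain ⟨ε', h3, h4⟩ := hg
  refine ⟨min ε ε', lt_min h1 h3, fun s hs => ?_⟩
  have e1 := h2 s ⟨hs.1, hs.2.trans (by linarith [min_le_left ε ε'])⟩
  have e2 := h4 s ⟨hs.1, hs.2.trans (by linarith [min_le_right ε ε'])⟩
  simp only [e1, e2]
  push_cast
  ring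

lemma HasL.comb {f g : ℝ → ℝ} {a : ℝ} {m l : ℤ} (k : ℤ) (hf : HasL f a m) (hg : HasL g a l) :
    HasL (fun s => f s + k * g s) a (m + k * l) := by
  obtain ⟨ε, h1, h2⟩ := hf
  obtain ⟨ε', h3, h4⟩ := hg
  refine ⟨min ε ε', lt_min h1 h3, fun s hs => ?_⟩
  have e1 := h2 s ⟨le_trans (by linarith [min_le_left ε ε']) hs.1, hs.2⟩
  have e2 := h4 s ⟨le_trans (by linarith [min_le_right ε ε']) hs.1, hs.2⟩
  simp only [e1, e2]
  push_cast
  ring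

/-- Piecewise linearity, with breakpoints and slopes indexed by naturals. -/
def PLN (f : ℝ → ℝ) (L : ℝ) (n : ℕ) (t : ℕ → ℝ) (m : ℕ → ℤ) : Prop :=
  t 0 = 0 ∧ t n = L ∧ (∀ i < n, t i < t (i + 1)) ∧
    ∀ i < n, ∀ s ∈ Set.Icc (t i) (t (i + 1)), f s = f (t i) + (m i : ℝ) * (s - t i)

lemma MetricGraphModel.PLInt.exists_pln {f : ℝ → ℝ} {L : ℝ} (h : PLInt f L) : ∃ n t m, PLN f L n t m := by
  obtain ⟨n, t, h0, hL, hmono, hs⟩ := h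
  choose m hm using hs
  refine ⟨n, fun i => if h : i < n + 1 then t ⟨i, h⟩ else 0,
    fun i => if h : i < n then m ⟨i, h⟩ else 0, ?_, ?_, ?_, ?_⟩
  · simpa using h0
  · simpa [Fin.last] using hL
  · intro i hi
    have h1 : i < n + 1 := by omega
    have h2 : i + 1 < n + 1 := by omega
    simp only [h1, h2, dif_pos]
    exact hmono (by simp [Fin.lt_def])
  · intro i hi s hs
    have h1 : i < n + 1 := by omega
    have h2 : i + 1 < n + 1 := by omega
    simp only [h1, h2, hi, dif_pos] at hs ⊢
    exact hm ⟨i, hi⟩ s hs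

section PLNlemmas

variable {f : ℝ → ℝ} {L : ℝ} {n : ℕ} {t : ℕ → ℝ} {m : ℕ → ℤ}

lemma PLN.lt (h : PLN f L n t m) {i j : ℕ} (hij : i < j) (hj : j ≤ n) : t i < t j := by
  induction j, hij using Nat.le_induction with
  | base => exact h.2.2.1 i (by omega)
  | succ k hk ih => exact (ih (by omega)).trans (h.2.2.1 k (by omega))

lemma PLN.locR (h : PLN f L n t m) {a : ℝ} (h0 : 0 ≤ a) (hL : a < L) :
    ∃ i < n, t i ≤ a ∧ a < t (i + 1) := by
  have key : ∀ k ≤ n, a < t k → ∃ i < n, t i ≤ a ∧ a < t (i + 1) := by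
    intro k
    induction k with
    | zero => intro _ h1; rw [h.1] at h1; linarith
    | succ k ih =>
      intro hk h1
      by_cases h2 : a < t k
      · exact ih (by omega) h2
      · exact ⟨k, by omega, not_lt.1 h2, h1⟩
  exact key n le_rfl (by rw [h.2.1]; exact hL)

lemma PLN.locL (h : PLN f L n t m) {a : ℝ} (h0 : 0 < a) (hL : a ≤ L) :
    ∃ i < n, t i < a ∧ a ≤ t (i + 1) := by
  have key : ∀ k ≤ n, a ≤ t k → ∃ i < n, t i < a ∧ a ≤ t (i + 1) := by
    intro k
    induction k with
    | zero => intro _ h1; rw [h.1] at h1; linarith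
    | succ k ih =>
      intro hk h1
      by_cases h2 : a ≤ t k
      · exact ih (by omega) h2
      · exact ⟨k, by omega, not_le.1 h2, h1⟩
  exact key n le_rfl (by rw [h.2.1]; exact hL)

lemma PLN.hasR (h : PLN f L n t m) {i : ℕ} (hi : i < n) {a : ℝ} (h1 : t i ≤ a)
    (h2 : a < t (i + 1)) : HasR f a (m i) := by
  refine ⟨t (i + 1) - a, by linarith, fun s hs => ?_⟩
  rw [h.2.2.2 i hi s ⟨h1.trans hs.1, by linarith [hs.2]⟩, h.2.2.2 i hi a ⟨h1, h2.le⟩]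
  ring

lemma PLN.hasL (h : PLN f L n t m) {i : ℕ} (hi : i < n) {a : ℝ} (h1 : t i < a)
    (h2 : a ≤ t (i + 1)) : HasL f a (-m i) := by
  refine ⟨a - t i, by linarith, fun s hs => ?_⟩
  rw [h.2.2.2 i hi s ⟨by linarith [hs.1], hs.2.trans h2⟩, h.2.2.2 i hi a ⟨h1.le, h2⟩]
  push_cast
  ring

lemma PLN.pos (h : PLN f L n t m) (hL : 0 < L) : 0 < n := by
  rcases Nat.eq_zero_or_pos n with h1 | h1
  · subst h1; have := h.1; have := h.2.1; linarith
  · exact h1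

lemma PLN.mem (h : PLN f L n t m) {i : ℕ} (h0 : 0 < i) (hi : i < n) : 0 < t i ∧ t i < L := by
  constructor
  · have := h.lt h0 hi.le; rwa [h.1] at this
  · have := h.lt hi le_rfl; rwa [h.2.1] at this

lemma PLN.slopeR_zero (h : PLN f L n t m) (hL : 0 < L) : slopeR f 0 = m 0 := by
  have hn := h.pos hL
  refine slopeR_of_hasR (h.hasR hn h.1.le ?_)
  rw [← h.1]; exact h.2.2.1 0 hn

lemma PLN.slopeL_last (h : PLN f L n t m) (hL : 0 < L) : slopeL f L = -m (n - 1) := by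
  have hn := h.pos hL
  have e : n - 1 + 1 = n := by omega
  refine slopeL_of_hasL (h.hasL (by omega) ?_ ?_)
  · rw [← h.2.1]; exact h.lt (by omega) le_rfl
  · rw [e, h.2.1]

lemma PLN.d_break (h : PLN f L n t m) {i : ℕ} (hi : i + 1 < n) :
    slopeR f (t (i + 1)) + slopeL f (t (i + 1)) = m (i + 1) - m i := by
  rw [slopeR_of_hasR (h.hasR hi le_rfl (h.2.2.1 _ hi)),
    slopeL_of_hasL (h.hasL (by omega : i < n) (h.2.2.1 _ (by omega)) le_rfl)]
  ring

lemma PLN.d_zero (h : PLN f L n t m) {a : ℝ} (h0 : 0 < a) (hL : a < L)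
    (hne : ∀ i, i + 1 < n → a ≠ t (i + 1)) : slopeR f a + slopeL f a = 0 := by
  obtain ⟨i, hi, h1, h2⟩ := h.locR h0.le hL
  have h3 : t i < a := by
    rcases h1.lt_or_eq with h3 | h3
    · exact h3
    · exfalso
      cases i with
      | zero => rw [h.1] at h3; linarith
      | succ k => exact hne k hi h3.symm
  rw [slopeR_of_hasR (h.hasR hi h1 h2), slopeL_of_hasL (h.hasL hi h3 h2.le)]
  ring

lemma PLN.telescope (h : PLN f L n t m) {i j : ℕ} (hij : i ≤ j) (hj : j < n) :
    ∑ k ∈ Finset.Ico i j, (slopeR f (t (k + 1)) + slopeL f (t (k + 1))) = m j - m i := by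
  induction j, hij using Nat.le_induction with
  | base => simp
  | succ k hk ih =>
    rw [Finset.sum_Ico_succ_top hk, ih (by omega), h.d_break hj]
    ring

lemma PLN.injOn (h : PLN f L n t m) : Set.InjOn t (Set.Iic n) := by
  intro i hi j hj hij
  rcases lt_trichotomy i j with h1 | h1 | h1
  · have := h.lt h1 hj; linarith
  · exact h1
  · have := h.lt h1 hi; linarith

lemma PLN.drop (h : PLN f L n t m) (w : ℝ → ℤ) (N : ℤ)
    (hw : ∀ s, 0 < s → s < L → -w s ≤ slopeR f s + slopeL f s)
    (hN : ∀ P : Finset ℝ, ∑ s ∈ P, w s ≤ N) {i j : ℕ} (hij : i ≤ j) (hj : j < n) :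
    m i - m j ≤ N := by
  have h1 := h.telescope hij hj
  have h2 : ∑ k ∈ Finset.Ico i j, -w (t (k + 1)) ≤
      ∑ k ∈ Finset.Ico i j, (slopeR f (t (k + 1)) + slopeL f (t (k + 1))) := by
    refine Finset.sum_le_sum fun k hk => ?_
    have hk' := Finset.mem_Ico.1 hk
    have := h.mem (Nat.succ_pos k) (by omega)
    exact hw _ this.1 this.2
  have h3 : ∑ k ∈ Finset.Ico i j, w (t (k + 1)) ≤ N := by
    refine le_trans (le_of_eq ?_) (hN ((Finset.Ico i j).image fun k => t (k + 1)))
    rw [Finset.sum_image]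
    intro a ha b hb hab
    have ha' := Finset.mem_Ico.1 ha
    have hb' := Finset.mem_Ico.1 hb
    have := h.injOn (show a + 1 ≤ n by omega) (show b + 1 ≤ n by omega) hab
    omega
  rw [Finset.sum_neg_distrib] at h2
  linarith

lemma PLN.exists_neg (h : PLN f L n t m) (hlt : f L < f 0) : ∃ i < n, m i < 0 := by
  by_contra hcon
  push Not at hcon
  have key : ∀ k ≤ n, f 0 ≤ f (t k) := by
    intro k
    induction k with
    | zero => intro _; rw [h.1]
    | succ k ih =>
      intro hk
      have h1 := h.2.2.1 k (by omega)
      rw [h.2.2.2 k (by omega) (t (k + 1)) ⟨h1.le, le_rfl⟩]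
      have h2 : (0 : ℝ) ≤ m k := by exact_mod_cast hcon k (by omega)
      have := mul_nonneg h2 (by linarith : (0 : ℝ) ≤ t (k + 1) - t k)
      linarith [ih (by omega)]
  have := key n le_rfl
  rw [h.2.1] at this
  linarith

lemma PLN.exists_pos (h : PLN f L n t m) (hlt : f 0 < f L) : ∃ i < n, 0 < m i := by
  by_contra hcon
  push Not at hcon
  have key : ∀ k ≤ n, f (t k) ≤ f 0 := by
    intro k
    induction k with
    | zero => intro _; rw [h.1]
    | succ k ih =>
      intro hk
      have h1 := h.2.2.1 k (by omega)
      rw [h.2.2.2 k (by omega) (t (k + 1)) ⟨h1.le, le_rfl⟩]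
      have h2 : (m k : ℝ) ≤ 0 := by exact_mod_cast hcon k (by omega)
      have := mul_nonneg (neg_nonneg.2 h2) (by linarith : (0 : ℝ) ≤ t (k + 1) - t k)
      linarith [ih (by omega)]
  have := key n le_rfl
  rw [h.2.1] at this
  linarith

/-- If `f 0 = f L` and some slope is positive then some slope is negative. -/
lemma PLN.opp (h : PLN f L n t m) (heq : f 0 = f L) :
    (∀ i < n, m i = 0) ∨ ((∃ i < n, 0 < m i) ∧ ∃ i < n, m i < 0) := by
  have hsum : ∀ k ≤ n, f (t k) = f 0 + ∑ i ∈ Finset.range k, (m i : ℝ) * (t (i + 1) - t i) := by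
    intro k
    induction k with
    | zero => intro _; simp [h.1]
    | succ k ih =>
      intro hk
      have h1 := h.2.2.1 k (by omega)
      rw [h.2.2.2 k (by omega) (t (k + 1)) ⟨h1.le, le_rfl⟩, ih (by omega),
        Finset.sum_range_succ]
      ring
  have h0 := hsum n le_rfl
  rw [h.2.1, heq] at h0
  have h0' : ∑ i ∈ Finset.range n, (m i : ℝ) * (t (i + 1) - t i) = 0 := by linarith
  have hd : ∀ i ∈ Finset.range n, 0 < t (i + 1) - t i := fun i hi => by
    linarith [h.2.2.1 i (Finset.mem_range.1 hi)]
  have zero_of : (∀ i ∈ Finset.range n, (m i : ℝ) * (t (i + 1) - t i) = 0) →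
      ∀ i < n, m i = 0 := by
    intro hz i hi
    have h1 := hz i (Finset.mem_range.2 hi)
    have h2 := hd i (Finset.mem_range.2 hi)
    rcases mul_eq_zero.1 h1 with h3 | h3
    · exact_mod_cast h3
    · linarith
  by_cases hp : ∃ i < n, 0 < m i
  · by_cases hn : ∃ i < n, m i < 0
    · exact Or.inr ⟨hp, hn⟩
    · left
      push Not at hn
      refine zero_of ((Finset.sum_eq_zero_iff_of_nonneg fun i hi => ?_).1 h0')
      have : (0 : ℝ) ≤ m i := by exact_mod_cast hn i (Finset.mem_range.1 hi)
      exact mul_nonneg this (hd i hi).le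
  · left
    push Not at hp
    refine zero_of ((Finset.sum_eq_zero_iff_of_nonpos fun i hi => ?_).1 h0')
    have : (m i : ℝ) ≤ 0 := by exact_mod_cast hp i (Finset.mem_range.1 hi)
    exact mul_nonpos_of_nonpos_of_nonneg this (hd i hi).le

end PLNlemmas

/-- Piecewise linearity with respect to a finite set of breakpoints. -/
def PLF (f : ℝ → ℝ) (L : ℝ) (S : Finset ℝ) : Prop :=
  ∀ a b, 0 ≤ a → a < b → b ≤ L → (∀ c ∈ S, ¬ (a < c ∧ c < b)) →
    ∃ m : ℤ, ∀ s ∈ Set.Icc a b, f s = f a + (m : ℝ) * (s - a)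

lemma MetricGraphModel.PLInt.exists_plf {f : ℝ → ℝ} {L : ℝ} (h : PLInt f L) : ∃ S, PLF f L S := by
  obtain ⟨n, t, m, h⟩ := h.exists_pln
  refine ⟨(Finset.range (n + 1)).image t, fun a b h0 hab hb hc => ?_⟩
  obtain ⟨i, hi, h1, h2⟩ := h.locR h0 (hab.trans_le hb)
  have h3 : b ≤ t (i + 1) := by
    by_contra h3
    exact hc (t (i + 1)) (Finset.mem_image_of_mem _ (Finset.mem_range.2 (by omega)))
      ⟨h2, not_le.1 h3⟩
  refine ⟨m i, fun s hs => ?_⟩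
  rw [h.2.2.2 i hi s ⟨h1.trans hs.1, hs.2.trans h3⟩, h.2.2.2 i hi a ⟨h1, h2.le⟩]
  ring

lemma PLF.plInt {f : ℝ → ℝ} {L : ℝ} {S : Finset ℝ} (hL : 0 < L) (h : PLF f L S) : PLInt f L := by
  set T : Finset ℝ := insert 0 (insert L (S.filter fun c => 0 < c ∧ c < L)) with hT
  have h0 : (0 : ℝ) ∈ T := by simp [hT]
  have hLT : L ∈ T := by simp [hT]
  have hTb : ∀ c ∈ T, 0 ≤ c ∧ c ≤ L := by
    intro c hc
    simp only [hT, Finset.mem_insert, Finset.mem_filter] at hc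
    rcases hc with rfl | rfl | ⟨_, h1, h2⟩
    · exact ⟨le_rfl, hL.le⟩
    · exact ⟨hL.le, le_rfl⟩
    · exact ⟨h1.le, h2.le⟩
  have hcard : 0 < T.card := Finset.card_pos.2 ⟨0, h0⟩
  obtain ⟨n, hn⟩ : ∃ n, T.card = n + 1 := ⟨T.card - 1, by omega⟩
  let t := T.orderEmbOfFin hn
  have hsurj : ∀ c ∈ T, ∃ j, t j = c := by
    intro c hc
    have : c ∈ Set.range t := by
      rw [Finset.range_orderEmbOfFin]; exact hc
    exact this
  have hmem : ∀ j, t j ∈ T := fun j => Finset.orderEmbOfFin_mem T hn j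
  refine ⟨n, t, ?_, ?_, t.strictMono, ?_⟩
  · obtain ⟨j, hj⟩ := hsurj 0 h0
    have h1 : t 0 ≤ t j := t.monotone (Fin.zero_le j)
    linarith [(hTb _ (hmem 0)).1]
  · obtain ⟨j, hj⟩ := hsurj L hLT
    have h1 : t j ≤ t (Fin.last n) := t.monotone (Fin.le_last j)
    linarith [(hTb _ (hmem (Fin.last n))).2]
  · intro i
    refine h _ _ (hTb _ (hmem _)).1 (t.strictMono i.castSucc_lt_succ) (hTb _ (hmem _)).2 ?_
    rintro c hc ⟨h1, h2⟩
    have hcT : c ∈ T := by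
      simp only [hT, Finset.mem_insert, Finset.mem_filter]
      exact Or.inr (Or.inr ⟨hc, (hTb _ (hmem _)).1.trans_lt h1, h2.trans_le (hTb _ (hmem _)).2⟩)
    obtain ⟨j, rfl⟩ := hsurj c hcT
    have h3 := t.lt_iff_lt.1 h1
    have h4 := t.lt_iff_lt.1 h2
    simp only [Fin.lt_def, Fin.val_castSucc, Fin.val_succ] at h3 h4
    omega

lemma MetricGraphModel.PLInt.comb {f g : ℝ → ℝ} {L : ℝ} (hL : 0 < L) (k : ℤ) (hf : PLInt f L) (hg : PLInt g L) :
    PLInt (fun s => f s + k * g s) L := by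
  obtain ⟨S, hS⟩ := hf.exists_plf
  obtain ⟨T, hT⟩ := hg.exists_plf
  refine PLF.plInt (S := S ∪ T) hL fun a b h0 hab hb hc => ?_
  obtain ⟨m, hm⟩ := hS a b h0 hab hb fun c h => hc c (Finset.mem_union_left _ h)
  obtain ⟨l, hl⟩ := hT a b h0 hab hb fun c h => hc c (Finset.mem_union_right _ h)
  refine ⟨m + k * l, fun s hs => ?_⟩
  simp only [hm s hs, hl s hs]
  push_cast
  ring

lemma MetricGraphModel.PLInt.hasR {f : ℝ → ℝ} {L a : ℝ} (h : PLInt f L) (h0 : 0 ≤ a) (hL : a < L) :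
    HasR f a (slopeR f a) := by
  obtain ⟨n, t, m, h⟩ := h.exists_pln
  obtain ⟨i, hi, h1, h2⟩ := h.locR h0 hL
  have := h.hasR hi h1 h2
  rwa [slopeR_of_hasR this]

lemma MetricGraphModel.PLInt.hasL {f : ℝ → ℝ} {L a : ℝ} (h : PLInt f L) (h0 : 0 < a) (hL : a ≤ L) :
    HasL f a (slopeL f a) := by
  obtain ⟨n, t, m, h⟩ := h.exists_pln
  obtain ⟨i, hi, h1, h2⟩ := h.locL h0 hL
  have := h.hasL hi h1 h2
  rwa [slopeL_of_hasL this]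

/-! ### Linear combinations of rational functions -/

noncomputable def ratComb {Γ : MetricGraphModel} (f : RationalFunction Γ) (k : ℤ)
    (g : RationalFunction Γ) : RationalFunction Γ where
  vVal v := f.vVal v + k * g.vVal v
  eFun e s := f.eFun e s + k * g.eFun e s
  pl e := (f.pl e).comb (Γ.len_pos e) k (g.pl e)
  srcVal e := by simp only [f.srcVal, g.srcVal]
  tgtVal e := by simp only [f.tgtVal, g.tgtVal]

lemma ratDiv_comb {Γ : MetricGraphModel} (f : RationalFunction Γ) (k : ℤ)
    (g : RationalFunction Γ) (p : Γ.Pt) :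
    ratDiv (ratComb f k g) p = ratDiv f p + k * ratDiv g p := by
  have hR : ∀ e a, 0 ≤ a → a < Γ.len e → slopeR ((ratComb f k g).eFun e) a =
      slopeR (f.eFun e) a + k * slopeR (g.eFun e) a := fun e a h0 h1 =>
    slopeR_of_hasR (((f.pl e).hasR h0 h1).comb k ((g.pl e).hasR h0 h1))
  have hL : ∀ e a, 0 < a → a ≤ Γ.len e → slopeL ((ratComb f k g).eFun e) a =
      slopeL (f.eFun e) a + k * slopeL (g.eFun e) a := fun e a h0 h1 =>
    slopeL_of_hasL (((f.pl e).hasL h0 h1).comb k ((g.pl e).hasL h0 h1))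
  rcases p with v | ⟨e, a, h0, h1⟩
  · simp only [ratDiv]
    rw [Finset.mul_sum, ← Finset.sum_add_distrib]
    refine Finset.sum_congr rfl fun e _ => ?_
    rw [hR e 0 le_rfl (Γ.len_pos e), hL e _ (Γ.len_pos e) le_rfl]
    split_ifs <;> ring
  · simp only [ratDiv]
    rw [hR e a h0.le h1, hL e a h0 h1.le]
    ring

/-! ### The degree of a principal divisor -/

lemma edge_sum {f : ℝ → ℝ} {L : ℝ} (hL : 0 < L) (h : PLInt f L) :
    ∃ T : Finset {t : ℝ // 0 < t ∧ t < L},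
      (∀ q, q ∉ T → slopeR f q.1 + slopeL f q.1 = 0) ∧
      ∑ q ∈ T, (slopeR f q.1 + slopeL f q.1) = - slopeR f 0 - slopeL f L := by
  obtain ⟨n, t, m, h⟩ := h.exists_pln
  have hn := h.pos hL
  set P : Finset ℝ := (Finset.Ico 0 (n - 1)).image fun k => t (k + 1) with hP
  refine ⟨P.subtype fun t => 0 < t ∧ t < L, ?_, ?_⟩
  · rintro ⟨a, h0, h1⟩ hq
    refine h.d_zero h0 h1 ?_
    rintro i hi rfl
    apply hq
    rw [Finset.mem_subtype]
    exact Finset.mem_image_of_mem (fun k => t (k + 1)) (Finset.mem_Ico.2 ⟨by omega, by omega⟩)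
  · rw [Finset.sum_subtype_of_mem (fun a => slopeR f a + slopeL f a)]
    · rw [hP, Finset.sum_image, h.telescope (by omega) (by omega), h.slopeR_zero hL,
        h.slopeL_last hL]
      · ring
      · intro a ha b hb hab
        have ha' := Finset.mem_Ico.1 ha
        have hb' := Finset.mem_Ico.1 hb
        have := h.injOn (show a + 1 ≤ n by omega) (show b + 1 ≤ n by omega) hab
        omega
    · intro a ha
      obtain ⟨k, hk, rfl⟩ := Finset.mem_image.1 ha
      have hk' := Finset.mem_Ico.1 hk
      exact h.mem (Nat.succ_pos k) (by omega)

lemma ratDiv_deg {Γ : MetricGraphModel} (f : RationalFunction Γ) :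
    DivFinSupp (ratDiv f) ∧ divDegree (ratDiv f) = 0 := by
  choose T hT1 hT2 using fun e => edge_sum (Γ.len_pos e) (f.pl e)
  set U : Finset Γ.Pt := Finset.univ.disjSum (Finset.univ.sigma T) with hU
  have hsub : Function.support (ratDiv f) ⊆ (U : Set Γ.Pt) := by
    rintro (v | ⟨e, q⟩) hp
    · simp [hU]
    · by_contra hc
      apply hp
      refine hT1 e q fun hq => hc ?_
      simp [hU, hq]
  refine ⟨U.finite_toSet.subset hsub, ?_⟩
  unfold divDegree
  rw [finsum_eq_sum_of_support_subset _ hsub, hU, Finset.sum_disjSum, Finset.sum_sigma]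
  have h1 : ∀ e : Γ.E, ∑ q ∈ T e, ratDiv f (Sum.inr ⟨e, q⟩) =
      - slopeR (f.eFun e) 0 - slopeL (f.eFun e) (Γ.len e) := hT2
  simp only [h1]
  have h2 : ∑ v : Γ.V, ratDiv f (Sum.inl v) =
      ∑ e : Γ.E, (slopeR (f.eFun e) 0 + slopeL (f.eFun e) (Γ.len e)) := by
    simp only [ratDiv]
    rw [Finset.sum_comm]
    refine Finset.sum_congr rfl fun e _ => ?_
    rw [Finset.sum_add_distrib]
    simp
  rw [h2, ← Finset.sum_add_distrib]
  exact Finset.sum_eq_zero fun e _ => by ring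

/-! ### Counting chips on an edge -/

noncomputable def wt (Γ : MetricGraphModel) (e : Γ.E) (p : Γ.Pt) (s : ℝ) : ℤ :=
  if ∃ h : 0 < s ∧ s < Γ.len e, p = Sum.inr ⟨e, ⟨s, h⟩⟩ then 1 else 0

noncomputable def cnt (Γ : MetricGraphModel) (e : Γ.E) (p : Γ.Pt) : ℤ :=
  if interiorOf Γ e p then 1 else 0

lemma wt_sum (Γ : MetricGraphModel) (e : Γ.E) (p : Γ.Pt) (P : Finset ℝ) :
    ∑ s ∈ P, wt Γ e p s ≤ cnt Γ e p := by
  unfold cnt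
  split_ifs with h
  · obtain ⟨⟨a, ha⟩, rfl⟩ := h
    have : ∀ s ∈ P, wt Γ e (Sum.inr ⟨e, ⟨a, ha⟩⟩) s ≤ if s = a then 1 else 0 := by
      intro s _
      unfold wt
      split_ifs with h1 h2 h2
      · exact le_rfl
      · obtain ⟨h, h1⟩ := h1
        simp only [Sum.inr.injEq, Sigma.mk.injEq, heq_eq_eq, true_and, Subtype.mk.injEq] at h1
        exact absurd h1.symm h2
      · norm_num
      · norm_num
    refine (Finset.sum_le_sum this).trans ?_
    rw [Finset.sum_ite_eq']
    split_ifs <;> norm_num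
  · refine (Finset.sum_eq_zero fun s _ => ?_).le
    unfold wt
    rw [if_neg]
    rintro ⟨h1, h2⟩
    exact h ⟨_, h2⟩

lemma unit_wt (Γ : MetricGraphModel) (e : Γ.E) (p : Γ.Pt) (s : ℝ) (h : 0 < s ∧ s < Γ.len e) :
    unitDiv Γ p (Sum.inr ⟨e, ⟨s, h⟩⟩) = wt Γ e p s := by
  unfold unitDiv wt
  by_cases h1 : (Sum.inr ⟨e, ⟨s, h⟩⟩ : Γ.Pt) = p
  · rw [if_pos h1, if_pos ⟨h, h1.symm⟩]
  · rw [if_neg h1, if_neg]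
    rintro ⟨h2, h3⟩
    exact h1 h3.symm

lemma unit_nonneg (Γ : MetricGraphModel) (p z : Γ.Pt) : 0 ≤ unitDiv Γ p z := by
  unfold unitDiv; split_ifs <;> norm_num

lemma cnt_nonneg (Γ : MetricGraphModel) (e : Γ.E) (p : Γ.Pt) : 0 ≤ cnt Γ e p := by
  unfold cnt; split_ifs <;> norm_num

lemma cnt_total (Γ : MetricGraphModel) (p : Γ.Pt) (A : Finset Γ.V) :
    ∑ e : Γ.E, cnt Γ e p + ∑ v ∈ A, unitDiv Γ p (Sum.inl v) ≤ 1 := by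
  rcases p with w | ⟨e0, q⟩
  · have h1 : ∀ e, cnt Γ e (Sum.inl w) = 0 := by
      intro e
      unfold cnt
      rw [if_neg]
      rintro ⟨q, hq⟩
      cases hq
    have h2 : ∀ v, unitDiv Γ (Sum.inl w) (Sum.inl v) = if v = w then 1 else 0 := by
      intro v
      simp [unitDiv]
    simp only [h1, h2, Finset.sum_const_zero, zero_add]
    rw [Finset.sum_ite_eq']
    split_ifs <;> norm_num
  · have h1 : ∀ e, cnt Γ e (Sum.inr ⟨e0, q⟩) ≤ if e = e0 then 1 else 0 := by
      intro e
      unfold cnt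
      by_cases h : e = e0
      · rw [if_pos h]; split_ifs <;> norm_num
      · rw [if_neg h, if_neg]
        rintro ⟨q', hq⟩
        simp only [Sum.inr.injEq, Sigma.mk.injEq] at hq
        exact h hq.1.symm
    have h2 : ∀ v, unitDiv Γ (Sum.inr ⟨e0, q⟩) (Sum.inl v) = 0 := by
      intro v
      simp [unitDiv]
    simp only [h2, Finset.sum_const_zero, add_zero]
    refine (Finset.sum_le_sum fun e _ => h1 e).trans ?_
    simp

/-! ### Edge cuts -/

lemma walk_cross {Γ : MetricGraphModel} (A : Γ.V → Prop) (L : List (Γ.E × Bool)) (u v : Γ.V)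
    (h : IsWalk Γ L u v) (hu : A u) (hv : ¬ A v) :
    ∃ x ∈ L, ¬ (A (Γ.src x.1) ↔ A (Γ.tgt x.1)) := by
  induction L generalizing u with
  | nil => exact absurd (h ▸ hu) hv
  | cons x xs ih =>
    obtain ⟨h1, h2⟩ := h
    by_cases h3 : A (Γ.dTgt x)
    · obtain ⟨y, hy, hy2⟩ := ih _ h2 h3
      exact ⟨y, List.mem_cons_of_mem _ hy, hy2⟩
    · refine ⟨x, List.mem_cons_self, ?_⟩
      rw [← h1] at hu
      unfold dSrc at hu
      unfold dTgt at h3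
      split_ifs at hu h3 <;> tauto

lemma cut_card {Γ : MetricGraphModel} (h3 : Γ.ThreeEdgeConnected) (A : Γ.V → Prop) (u v : Γ.V)
    (hu : A u) (hv : ¬ A v) :
    3 ≤ (Finset.univ.filter fun e : Γ.E => ¬ (A (Γ.src e) ↔ A (Γ.tgt e))).card := by
  by_contra hc
  obtain ⟨L, hL, hS⟩ := h3 _ (by omega :
    (Finset.univ.filter fun e : Γ.E => ¬ (A (Γ.src e) ↔ A (Γ.tgt e))).card ≤ 2) u v
  obtain ⟨x, hx, hx2⟩ := walk_cross A L u v hL hu hv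
  exact hS x hx (by simp only [Finset.mem_filter, Finset.mem_univ, true_and]; exact hx2)

/-! ### Uniqueness -/

lemma edge_drop {Γ : MetricGraphModel} (h : RationalFunction Γ) (p q : Γ.Pt)
    (hdiv : ∀ z, - unitDiv Γ p z - unitDiv Γ q z ≤ ratDiv h z) (e : Γ.E) {n : ℕ} {t : ℕ → ℝ}
    {m : ℕ → ℤ} (hp : PLN (h.eFun e) (Γ.len e) n t m) {i j : ℕ} (hij : i ≤ j) (hj : j < n) :
    m i - m j ≤ cnt Γ e p + cnt Γ e q := by
  refine hp.drop (fun s => wt Γ e p s + wt Γ e q s) _ (fun s h0 h1 => ?_) (fun P => ?_) hij hj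
  · have := hdiv (Sum.inr ⟨e, ⟨s, h0, h1⟩⟩)
    rw [unit_wt, unit_wt] at this
    simp only [ratDiv] at this
    linarith
  · rw [Finset.sum_add_distrib]
    exact add_le_add (wt_sum Γ e p P) (wt_sum Γ e q P)

lemma vVal_const {Γ : MetricGraphModel} (h3 : Γ.ThreeEdgeConnected) (h : RationalFunction Γ)
    (p q : Γ.Pt) (hdiv : ∀ z, - unitDiv Γ p z - unitDiv Γ q z ≤ ratDiv h z) (u v : Γ.V) :
    h.vVal u = h.vVal v := by
  by_contra hne
  obtain ⟨a, -, ha⟩ := Finset.exists_max_image Finset.univ h.vVal ⟨u, Finset.mem_univ u⟩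
  replace ha : ∀ w, h.vVal w ≤ h.vVal a := fun w => ha w (Finset.mem_univ w)
  obtain ⟨b, hb⟩ : ∃ b, h.vVal b ≠ h.vVal a := by
    by_contra hc
    push Not at hc
    exact hne ((hc u).trans (hc v).symm)
  set A : Γ.V → Prop := fun w => h.vVal w = h.vVal a with hA
  have hlt : ∀ w, ¬ A w → h.vVal w < h.vVal a := fun w hw => lt_of_le_of_ne (ha w) hw
  have hC := cut_card h3 A a b rfl hb
  have hedge : ∀ e : Γ.E, (if A (Γ.src e) then slopeR (h.eFun e) 0 else 0) +
      (if A (Γ.tgt e) then slopeL (h.eFun e) (Γ.len e) else 0) ≤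
      cnt Γ e p + cnt Γ e q - (if ¬ (A (Γ.src e) ↔ A (Γ.tgt e)) then 1 else 0) := by
    intro e
    obtain ⟨n, t, m, hp⟩ := (h.pl e).exists_pln
    have hn := hp.pos (Γ.len_pos e)
    rw [hp.slopeR_zero (Γ.len_pos e), hp.slopeL_last (Γ.len_pos e)]
    by_cases h1 : A (Γ.src e) <;> by_cases h2 : A (Γ.tgt e)
    · have := edge_drop h p q hdiv e hp (Nat.zero_le (n - 1)) (by omega)
      simp only [h1, h2, if_true, not_true, iff_self, if_false]
      linarith
    · have hlt' : h.eFun e (Γ.len e) < h.eFun e 0 := by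
        rw [h.srcVal, h.tgtVal, show h.vVal (Γ.src e) = h.vVal a from h1]
        exact hlt _ h2
      obtain ⟨i, hi, hm⟩ := hp.exists_neg hlt'
      have := edge_drop h p q hdiv e hp (Nat.zero_le i) hi
      simp only [h1, h2, if_true, if_false, iff_false, not_true, not_false_eq_true]
      linarith
    · have hlt' : h.eFun e 0 < h.eFun e (Γ.len e) := by
        rw [h.srcVal, h.tgtVal, show h.vVal (Γ.tgt e) = h.vVal a from h2]
        exact hlt _ h1
      obtain ⟨i, hi, hm⟩ := hp.exists_pos hlt'
      have := edge_drop h p q hdiv e hp (show i ≤ n - 1 by omega) (by omega)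
      simp only [h1, h2, if_true, if_false, iff_true, not_false_eq_true]
      linarith
    · have := cnt_nonneg Γ e p
      have := cnt_nonneg Γ e q
      simp only [h1, h2, if_false, iff_self, not_true]
      linarith
  have hsum := Finset.sum_le_sum fun e (_ : e ∈ Finset.univ) => hedge e
  have hR : ∑ e : Γ.E, (cnt Γ e p + cnt Γ e q -
      (if ¬ (A (Γ.src e) ↔ A (Γ.tgt e)) then (1 : ℤ) else 0)) ≤
      ∑ e : Γ.E, cnt Γ e p + ∑ e : Γ.E, cnt Γ e q - 3 := by
    rw [Finset.sum_sub_distrib, Finset.sum_add_distrib, Finset.sum_boole]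
    have : (3 : ℤ) ≤ ((Finset.univ.filter
      fun e : Γ.E => ¬ (A (Γ.src e) ↔ A (Γ.tgt e))).card : ℤ) := by exact_mod_cast hC
    linarith
  have hLeft : ∑ v ∈ Finset.univ.filter A, ratDiv h (Sum.inl v) =
      ∑ e : Γ.E, ((if A (Γ.src e) then slopeR (h.eFun e) 0 else 0) +
      (if A (Γ.tgt e) then slopeL (h.eFun e) (Γ.len e) else 0)) := by
    simp only [ratDiv]
    rw [Finset.sum_comm]
    refine Finset.sum_congr rfl fun e _ => ?_
    rw [Finset.sum_add_distrib, Finset.sum_ite_eq, Finset.sum_ite_eq]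
    simp
  have hlow : ∑ v ∈ Finset.univ.filter A, (- unitDiv Γ p (Sum.inl v) - unitDiv Γ q (Sum.inl v)) ≤
      ∑ v ∈ Finset.univ.filter A, ratDiv h (Sum.inl v) :=
    Finset.sum_le_sum fun v _ => hdiv _
  rw [Finset.sum_sub_distrib, Finset.sum_neg_distrib] at hlow
  have hp1 := cnt_total Γ p (Finset.univ.filter A)
  have hq1 := cnt_total Γ q (Finset.univ.filter A)
  linarith

lemma ratDiv_zero {Γ : MetricGraphModel} (h3 : Γ.ThreeEdgeConnected) (h : RationalFunction Γ)
    (p q p' q' : Γ.Pt) (hdiv : ∀ z, ratDiv h z =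
      unitDiv Γ p' z + unitDiv Γ q' z - unitDiv Γ p z - unitDiv Γ q z)
    (hpq : ¬ SameEdgeInterior Γ p q) (hpq' : ¬ SameEdgeInterior Γ p' q') (z : Γ.Pt) :
    ratDiv h z = 0 := by
  have hlow : ∀ z, - unitDiv Γ p z - unitDiv Γ q z ≤ ratDiv h z := by
    intro z
    rw [hdiv]
    linarith [unit_nonneg Γ p' z, unit_nonneg Γ q' z]
  have hconst := vVal_const h3 h p q hlow
  -- the negated function
  have hneg : ∀ z, - unitDiv Γ p' z - unitDiv Γ q' z ≤ ratDiv (ratComb h (-2) h) z := by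
    intro z
    rw [ratDiv_comb, hdiv]
    linarith [unit_nonneg Γ p z, unit_nonneg Γ q z]
  have hcnt : ∀ (a b : Γ.Pt), ¬ SameEdgeInterior Γ a b → ∀ e, cnt Γ e a + cnt Γ e b ≤ 1 := by
    intro a b hab e
    unfold cnt
    split_ifs with h1 h2
    · exact absurd ⟨e, h1, h2⟩ hab
    all_goals norm_num
  have hflat : ∀ e, ∃ n t m, PLN (h.eFun e) (Γ.len e) n t m ∧ ∀ i < n, m i = 0 := by
    intro e
    obtain ⟨n, t, m, hp⟩ := (h.pl e).exists_pln
    refine ⟨n, t, m, hp, ?_⟩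
    have heq : h.eFun e 0 = h.eFun e (Γ.len e) := by
      rw [h.srcVal, h.tgtVal]; exact hconst _ _
    rcases hp.opp heq with h0 | ⟨⟨i, hi, hmi⟩, j, hj, hmj⟩
    · exact h0
    · exfalso
      rcases le_total i j with hij | hij
      · have := edge_drop h p q hlow e hp hij hj
        have := hcnt p q hpq e
        linarith
      · have hp' : PLN ((ratComb h (-2) h).eFun e) (Γ.len e) n t (fun i => - m i) := by
          refine ⟨hp.1, hp.2.1, hp.2.2.1, fun i hi s hs => ?_⟩
          simp only [ratComb]
          rw [hp.2.2.2 i hi s hs]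
          push_cast
          ring
        have := edge_drop _ p' q' hneg e hp' hij hi
        have := hcnt p' q' hpq' e
        linarith
  rcases z with v | ⟨e, s, h0, h1⟩
  · simp only [ratDiv]
    refine Finset.sum_eq_zero fun e _ => ?_
    obtain ⟨n, t, m, hp, hm⟩ := hflat e
    have hn := hp.pos (Γ.len_pos e)
    rw [hp.slopeR_zero (Γ.len_pos e), hp.slopeL_last (Γ.len_pos e), hm 0 hn,
      hm (n - 1) (by omega)]
    simp
  · obtain ⟨n, t, m, hp, hm⟩ := hflat e
    simp only [ratDiv]
    obtain ⟨i, hi, a1, a2⟩ := hp.locR h0.le h1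
    obtain ⟨j, hj, b1, b2⟩ := hp.locL h0 h1.le
    rw [slopeR_of_hasR (hp.hasR hi a1 a2), slopeL_of_hasL (hp.hasL hj b1 b2), hm i hi, hm j hj]
    simp

lemma admissible_unique {Γ : MetricGraphModel} (h3 : Γ.ThreeEdgeConnected) (D : Divisor Γ)
    (x : Γ.V) (D1 D2 : Divisor Γ) (h1 : AdmissibleRep Γ D x D1) (h2 : AdmissibleRep Γ D x D2) :
    D1 = D2 := by
  obtain ⟨⟨f, hf⟩, p, q, hD1, hpq⟩ := h1
  obtain ⟨⟨g, hg⟩, p', q', hD2, hpq'⟩ := h2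
  have hz := ratDiv_zero h3 (ratComb f (-1) g) p q p' q' (fun z => by
    have e1 := hf z
    have e2 := hg z
    rw [ratDiv_comb]
    simp only [hD1, hD2] at e1 e2
    linarith) hpq hpq'
  funext z
  have e1 := hf z
  have e2 := hg z
  have e3 := hz z
  rw [ratDiv_comb] at e3
  linarith

/-! ### Moving two chips on an edge outwards -/

noncomputable def ramp (c d s : ℝ) : ℝ := max 0 (min (s - c) d)

lemma ramp_low {c d s : ℝ} (hd : 0 < d) (h : s ≤ c) : ramp c d s = 0 := by
  unfold ramp
  rw [min_eq_left (by linarith), max_eq_left (by linarith)]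

lemma ramp_mid {c d s : ℝ} (h : c ≤ s) (h2 : s ≤ c + d) : ramp c d s = s - c := by
  unfold ramp
  rw [min_eq_left (by linarith), max_eq_right (by linarith)]

lemma ramp_high {c d s : ℝ} (hd : 0 < d) (h2 : c + d ≤ s) : ramp c d s = d := by
  unfold ramp
  rw [min_eq_right (by linarith), max_eq_right (by linarith)]

lemma ramp_pl {c d L : ℝ} (hd : 0 < d) (hL : 0 < L) : PLInt (ramp c d) L := by
  refine PLF.plInt (S := {c, c + d}) hL fun a b h0 hab hb hc => ?_
  have h1 : ¬ (a < c ∧ c < b) := hc c (by simp)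
  have h2 : ¬ (a < c + d ∧ c + d < b) := hc (c + d) (by simp)
  by_cases h3 : b ≤ c
  · refine ⟨0, fun s hs => ?_⟩
    rw [ramp_low hd (hs.2.trans h3), ramp_low hd (hab.le.trans h3)]
    simp
  · have h4 : c ≤ a := by
      by_contra h4
      exact h1 ⟨not_le.1 h4, not_le.1 h3⟩
    by_cases h5 : b ≤ c + d
    · refine ⟨1, fun s hs => ?_⟩
      rw [ramp_mid (h4.trans hs.1) (hs.2.trans h5), ramp_mid h4 (hab.le.trans h5)]
      simp
    · have h6 : c + d ≤ a := by
        by_contra h6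
        exact h2 ⟨not_le.1 h6, not_le.1 h5⟩
      refine ⟨0, fun s hs => ?_⟩
      rw [ramp_high hd (h6.trans hs.1), ramp_high hd h6]
      simp

lemma ramp_hasR {c d : ℝ} (hd : 0 < d) (a : ℝ) :
    HasR (ramp c d) a (if c ≤ a ∧ a < c + d then 1 else 0) := by
  split_ifs with h
  · refine ⟨c + d - a, by linarith [h.2], fun s hs => ?_⟩
    rw [ramp_mid (h.1.trans hs.1) (by linarith [hs.2]), ramp_mid h.1 h.2.le]
    simp
  · by_cases h1 : c ≤ a
    · have h2 : c + d ≤ a := by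
        by_contra h2
        exact h ⟨h1, not_le.1 h2⟩
      refine ⟨1, one_pos, fun s hs => ?_⟩
      rw [ramp_high hd (h2.trans hs.1), ramp_high hd h2]
      simp
    · refine ⟨c - a, by linarith, fun s hs => ?_⟩
      rw [ramp_low hd (by linarith [hs.2]), ramp_low hd (not_le.1 h1).le]
      simp

lemma ramp_hasL {c d : ℝ} (hd : 0 < d) (a : ℝ) :
    HasL (ramp c d) a (if c < a ∧ a ≤ c + d then -1 else 0) := by
  split_ifs with h
  · refine ⟨a - c, by linarith [h.1], fun s hs => ?_⟩
    rw [ramp_mid (by linarith [hs.1]) (hs.2.trans h.2), ramp_mid h.1.le h.2]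
    push_cast
    ring
  · by_cases h1 : a ≤ c
    · refine ⟨1, one_pos, fun s hs => ?_⟩
      rw [ramp_low hd (hs.2.trans h1), ramp_low hd h1]
      simp
    · have h2 : c + d < a := by
        by_contra h2
        exact h ⟨not_le.1 h1, not_lt.1 h2⟩
      refine ⟨a - (c + d), by linarith, fun s hs => ?_⟩
      rw [ramp_high hd (by linarith [hs.1]), ramp_high hd h2.le]
      simp

noncomputable def bump (a b d : ℝ) (s : ℝ) : ℝ := ramp b d s + ((-1 : ℤ) : ℝ) * ramp (a - d) d s

lemma bump_slopeR {a b d : ℝ} (hd : 0 < d) (s : ℝ) : slopeR (bump a b d) s =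
    (if b ≤ s ∧ s < b + d then 1 else 0) - (if a - d ≤ s ∧ s < a then 1 else 0) := by
  have := slopeR_of_hasR ((ramp_hasR (c := b) hd s).comb (-1) (ramp_hasR (c := a - d) hd s))
  rw [sub_add_cancel] at this
  unfold bump
  rw [this]
  ring

lemma bump_slopeL {a b d : ℝ} (hd : 0 < d) (s : ℝ) : slopeL (bump a b d) s =
    (if a - d < s ∧ s ≤ a then 1 else 0) - (if b < s ∧ s ≤ b + d then 1 else 0) := by
  have := slopeL_of_hasL ((ramp_hasL (c := b) hd s).comb (-1) (ramp_hasL (c := a - d) hd s))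
  rw [sub_add_cancel] at this
  unfold bump
  rw [this]
  split_ifs <;> norm_num

noncomputable def bumpFun (Γ : MetricGraphModel) (e : Γ.E) (a b d : ℝ) (hd : 0 < d)
    (ha : 0 ≤ a - d) (hab : a ≤ b) (hb : b + d ≤ Γ.len e) : RationalFunction Γ where
  vVal _ := 0
  eFun e' := if e' = e then bump a b d else fun s => ramp (-1) 1 s + ((-1 : ℤ) : ℝ) * ramp (-1) 1 s
  pl e' := by
    split_ifs with h
    · exact (ramp_pl hd (Γ.len_pos e')).comb (Γ.len_pos e') (-1) (ramp_pl hd (Γ.len_pos e'))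
    · exact (ramp_pl one_pos (Γ.len_pos e')).comb (Γ.len_pos e') (-1)
        (ramp_pl one_pos (Γ.len_pos e'))
  srcVal e' := by
    split_ifs with h
    · unfold bump
      rw [ramp_low hd (by linarith), ramp_low hd ha]
      simp
    · simp
  tgtVal e' := by
    split_ifs with h
    · subst h
      unfold bump
      rw [ramp_high hd hb, ramp_high hd (by linarith)]
      simp
    · simp

noncomputable def ptAt (Γ : MetricGraphModel) (e : Γ.E) (s : ℝ) : Γ.Pt :=
  if h : 0 < s ∧ s < Γ.len e then Sum.inr ⟨e, ⟨s, h⟩⟩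
  else if s ≤ 0 then Sum.inl (Γ.src e) else Sum.inl (Γ.tgt e)

lemma ptAt_int (Γ : MetricGraphModel) (e : Γ.E) (s : ℝ) (h : 0 < s ∧ s < Γ.len e) :
    ptAt Γ e s = Sum.inr ⟨e, ⟨s, h⟩⟩ := by
  unfold ptAt; rw [dif_pos h]

lemma ptAt_zero (Γ : MetricGraphModel) (e : Γ.E) : ptAt Γ e 0 = Sum.inl (Γ.src e) := by
  simp [ptAt]

lemma ptAt_len (Γ : MetricGraphModel) (e : Γ.E) : ptAt Γ e (Γ.len e) = Sum.inl (Γ.tgt e) := by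
  simp [ptAt, Γ.len_pos e]

lemma unit_ptAt_inr (Γ : MetricGraphModel) (e e' : Γ.E) (s0 s : ℝ) (h : 0 < s ∧ s < Γ.len e') :
    unitDiv Γ (ptAt Γ e s0) (Sum.inr ⟨e', ⟨s, h⟩⟩) = if e' = e ∧ s = s0 then 1 else 0 := by
  unfold unitDiv
  by_cases h1 : e' = e ∧ s = s0
  · obtain ⟨rfl, rfl⟩ := h1
    rw [ptAt_int Γ e' s h]
    simp
  · rw [if_neg h1, if_neg]
    intro h2
    unfold ptAt at h2
    split_ifs at h2 with h3
    simp only [Sum.inr.injEq, Sigma.mk.injEq] at h2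
    obtain ⟨rfl, h4⟩ := h2
    simp only [heq_eq_eq, Subtype.mk.injEq] at h4
    exact h1 ⟨rfl, h4⟩

lemma unit_ptAt_src (Γ : MetricGraphModel) (e : Γ.E) (s : ℝ) (v : Γ.V) (h0 : 0 ≤ s)
    (h1 : s < Γ.len e) :
    unitDiv Γ (ptAt Γ e s) (Sum.inl v) = if Γ.src e = v ∧ s = 0 then 1 else 0 := by
  unfold unitDiv
  rcases h0.eq_or_lt with h | h
  · subst h
    rw [ptAt_zero]
    by_cases h2 : Γ.src e = v
    · simp [h2]
    · simp [h2, Ne.symm h2]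
  · rw [ptAt_int Γ e s ⟨h, h1⟩]
    simp [h.ne']

lemma unit_ptAt_tgt (Γ : MetricGraphModel) (e : Γ.E) (s : ℝ) (v : Γ.V) (h0 : 0 < s)
    (h1 : s ≤ Γ.len e) :
    unitDiv Γ (ptAt Γ e s) (Sum.inl v) = if Γ.tgt e = v ∧ s = Γ.len e then 1 else 0 := by
  unfold unitDiv
  rcases h1.eq_or_lt with h | h
  · subst h
    rw [ptAt_len]
    by_cases h2 : Γ.tgt e = v
    · simp [h2]
    · simp [h2, Ne.symm h2]
  · rw [ptAt_int Γ e s ⟨h0, h⟩]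
    simp [h.ne]

lemma bump_div (Γ : MetricGraphModel) (e : Γ.E) (a b d : ℝ) (hd : 0 < d)
    (ha : 0 ≤ a - d) (hab : a ≤ b) (hb : b + d ≤ Γ.len e) (z : Γ.Pt) :
    unitDiv Γ (ptAt Γ e a) z + unitDiv Γ (ptAt Γ e b) z =
      unitDiv Γ (ptAt Γ e (a - d)) z + unitDiv Γ (ptAt Γ e (b + d)) z +
      ratDiv (bumpFun Γ e a b d hd ha hab hb) z := by
  have hR0 : ∀ e' s, e' ≠ e → slopeR ((bumpFun Γ e a b d hd ha hab hb).eFun e') s = 0 := by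
    intro e' s he
    simp only [bumpFun, if_neg he]
    refine slopeR_of_hasR ⟨1, one_pos, fun s _ => ?_⟩
    simp
  have hL0 : ∀ e' s, e' ≠ e → slopeL ((bumpFun Γ e a b d hd ha hab hb).eFun e') s = 0 := by
    intro e' s he
    simp only [bumpFun, if_neg he]
    refine slopeL_of_hasL ⟨1, one_pos, fun s _ => ?_⟩
    simp
  have hR1 : ∀ s, slopeR ((bumpFun Γ e a b d hd ha hab hb).eFun e) s =
      (if b ≤ s ∧ s < b + d then 1 else 0) - (if a - d ≤ s ∧ s < a then 1 else 0) := by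
    intro s
    simp only [bumpFun, if_true]
    exact bump_slopeR hd s
  have hL1 : ∀ s, slopeL ((bumpFun Γ e a b d hd ha hab hb).eFun e) s =
      (if a - d < s ∧ s ≤ a then 1 else 0) - (if b < s ∧ s ≤ b + d then 1 else 0) := by
    intro s
    simp only [bumpFun, if_true]
    exact bump_slopeL hd s
  rcases z with v | ⟨e', s, hs⟩
  · simp only [ratDiv]
    rw [Finset.sum_eq_single e (fun e' _ he => by rw [hR0 e' _ he, hL0 e' _ he]; simp)
      (fun h => absurd (Finset.mem_univ e) h), hR1, hL1,
      unit_ptAt_src Γ e a v (by linarith) (by linarith),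
      unit_ptAt_src Γ e b v (by linarith) (by linarith),
      unit_ptAt_src Γ e (a - d) v ha (by linarith),
      unit_ptAt_tgt Γ e (b + d) v (by linarith) hb,
      if_neg (by rintro ⟨-, h⟩; linarith), if_neg (by rintro ⟨-, h⟩; linarith),
      if_neg (show ¬ (b ≤ 0 ∧ 0 < b + d) by rintro ⟨h, -⟩; linarith),
      if_neg (show ¬ (a - d < Γ.len e ∧ Γ.len e ≤ a) by rintro ⟨-, h⟩; linarith)]
    have e1 : (a - d ≤ 0 ∧ 0 < a) ↔ a - d = 0 :=
      ⟨fun h => le_antisymm h.1 ha, fun h => ⟨h.le, by linarith⟩⟩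
    have e2 : (b < Γ.len e ∧ Γ.len e ≤ b + d) ↔ b + d = Γ.len e :=
      ⟨fun h => le_antisymm hb h.2, fun h => ⟨by linarith, h.ge⟩⟩
    simp only [e1, e2, ite_and]
    split_ifs <;> norm_num
  · rw [unit_ptAt_inr, unit_ptAt_inr, unit_ptAt_inr, unit_ptAt_inr]
    simp only [ratDiv]
    by_cases he : e' = e
    · subst he
      rw [hR1, hL1]
      simp only [true_and]
      clear hR0 hL0 hR1 hL1
      have i1 : (if a - d < s ∧ s ≤ a then (1 : ℤ) else 0) - (if a - d ≤ s ∧ s < a then 1 else 0)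
          = (if s = a then 1 else 0) - (if s = a - d then 1 else 0) := by
        rcases lt_trichotomy s a with h | h | h <;>
        rcases lt_trichotomy s (a - d) with h' | h' | h' <;>
        first
        | (exfalso; linarith)
        | grind
      have i2 : (if b ≤ s ∧ s < b + d then (1 : ℤ) else 0) - (if b < s ∧ s ≤ b + d then 1 else 0)
          = (if s = b then 1 else 0) - (if s = b + d then 1 else 0) := by
        rcases lt_trichotomy s b with h | h | h <;>
        rcases lt_trichotomy s (b + d) with h' | h' | h' <;>
        first
        | (exfalso; linarith)
        | grind
      linarith
    · rw [hR0 e' s he, hL0 e' s he]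
      simp [he]

/-! ### Existence of admissible representatives -/

lemma unit_deg (Γ : MetricGraphModel) (p : Γ.Pt) :
    DivFinSupp (unitDiv Γ p) ∧ divDegree (unitDiv Γ p) = 1 := by
  have hsub : Function.support (unitDiv Γ p) ⊆ (({p} : Finset Γ.Pt) : Set Γ.Pt) := by
    intro z hz
    by_contra hc
    apply hz
    simp only [Finset.coe_singleton, Set.mem_singleton_iff] at hc
    simp [unitDiv, hc]
  refine ⟨Set.Finite.subset (Finset.finite_toSet _) hsub, ?_⟩
  unfold divDegree
  rw [finsum_eq_sum_of_support_subset _ hsub]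
  simp [unitDiv]

lemma deg_add {Γ : MetricGraphModel} {A B : Divisor Γ} (hA : DivFinSupp A) (hB : DivFinSupp B) :
    divDegree (fun z => A z + B z) = divDegree A + divDegree B :=
  finsum_add_distrib hA hB

lemma eff_peel {Γ : MetricGraphModel} {B : Divisor Γ} (hB : DivEffective B) (hf : DivFinSupp B)
    (hd : 0 < divDegree B) : ∃ p B', DivEffective B' ∧ DivFinSupp B' ∧
      divDegree B' = divDegree B - 1 ∧ ∀ z, B z = unitDiv Γ p z + B' z := by
  obtain ⟨p, hp⟩ : ∃ p, B p ≠ 0 := by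
    by_contra hc
    push Not at hc
    have : B = fun _ => 0 := funext hc
    rw [this] at hd
    simp [divDegree] at hd
  have hfin : DivFinSupp (fun z => B z - unitDiv Γ p z) := by
    refine (hf.union (unit_deg Γ p).1).subset ?_
    exact Function.support_sub _ _
  refine ⟨p, fun z => B z - unitDiv Γ p z, fun z => ?_, hfin, ?_, fun z => by ring⟩
  · have h1 := hB z
    unfold unitDiv
    dsimp only
    split_ifs with h
    · subst h; omega
    · omega
  · have h1 := deg_add (unit_deg Γ p).1 hfin
    have h2 : (fun z => unitDiv Γ p z + (B z - unitDiv Γ p z)) = B := by funext z; ring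
    rw [h2, (unit_deg Γ p).2] at h1
    linarith

lemma eff_zero {Γ : MetricGraphModel} {B : Divisor Γ} (hB : DivEffective B) (hf : DivFinSupp B)
    (hd : divDegree B = 0) (z : Γ.Pt) : B z = 0 := by
  by_contra hz
  have hsub : Function.support B ⊆ (Set.Finite.toFinset hf : Set Γ.Pt) := fun y hy =>
    (Set.Finite.mem_toFinset hf).2 hy
  unfold divDegree at hd
  rw [finsum_eq_sum_of_support_subset _ hsub] at hd
  exact hz ((Finset.sum_eq_zero_iff_of_nonneg fun i _ => hB i).1 hd z ((Set.Finite.mem_toFinset hf).2 hz))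

lemma eff_two {Γ : MetricGraphModel} {B : Divisor Γ} (hB : DivEffective B) (hf : DivFinSupp B)
    (hd : divDegree B = 2) : ∃ p q, ∀ z, B z = unitDiv Γ p z + unitDiv Γ q z := by
  obtain ⟨p, B1, h1, h2, h3, h4⟩ := eff_peel hB hf (by rw [hd]; norm_num)
  obtain ⟨q, B2, g1, g2, g3, g4⟩ := eff_peel h1 h2 (by rw [h3, hd]; norm_num)
  have := eff_zero g1 g2 (by rw [g3, h3, hd]; norm_num)
  exact ⟨p, q, fun z => by rw [h4, g4, this]; ring⟩

lemma spread (Γ : MetricGraphModel) (e : Γ.E) (a b : ℝ) (ha : 0 < a) (hab : a ≤ b)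
    (hb : b < Γ.len e) : ∃ (p q : Γ.Pt) (g : RationalFunction Γ), ¬ SameEdgeInterior Γ p q ∧
      ∀ z, unitDiv Γ (ptAt Γ e a) z + unitDiv Γ (ptAt Γ e b) z =
        unitDiv Γ p z + unitDiv Γ q z + ratDiv g z := by
  have hd : 0 < min a (Γ.len e - b) := lt_min ha (by linarith)
  have h1 := min_le_left a (Γ.len e - b)
  have h2 := min_le_right a (Γ.len e - b)
  refine ⟨_, _, _, ?_, bump_div Γ e a b (min a (Γ.len e - b)) hd (by linarith) hab (by linarith)⟩
  rintro ⟨e', ⟨q1, hq1⟩, ⟨q2, hq2⟩⟩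
  rcases min_choice a (Γ.len e - b) with h | h
  · rw [h, sub_self, ptAt_zero] at hq1
    cases hq1
  · rw [h, add_sub_cancel, ptAt_len] at hq2
    cases hq2

lemma admissible_exists {Γ : MetricGraphModel} (D : Divisor Γ) (hfin : DivFinSupp D)
    (hdeg : divDegree D = 3) (hrk : RankGE Γ D 1) (x : Γ.V) : ∃ Dx, AdmissibleRep Γ D x Dx := by
  obtain ⟨B, hB, hBf, f, hf⟩ := hrk (unitDiv Γ (Sum.inl x)) (unit_nonneg Γ _) (unit_deg Γ _).1
    (by rw [(unit_deg Γ _).2]; rfl)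
  have hBd : divDegree B = 2 := by
    have h1 : D = fun z => unitDiv Γ (Sum.inl x) z + (fun z => B z + ratDiv f z) z := by
      funext z
      have := hf z
      dsimp only
      linarith
    have h2 : DivFinSupp (fun z => B z + ratDiv f z) :=
      (hBf.union (ratDiv_deg f).1).subset (Function.support_add _ _)
    have h3 := deg_add (unit_deg Γ (Sum.inl x)).1 h2
    rw [← h1, deg_add hBf (ratDiv_deg f).1, (ratDiv_deg f).2, (unit_deg Γ _).2, hdeg] at h3
    linarith
  obtain ⟨p, q, hpq⟩ := eff_two hB hBf hBd
  by_cases hs : SameEdgeInterior Γ p q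
  · obtain ⟨e, ⟨⟨a, ha⟩, rfl⟩, ⟨⟨b, hb⟩, rfl⟩⟩ := hs
    obtain ⟨p', q', g, hn, hg⟩ : ∃ (p' q' : Γ.Pt) (g : RationalFunction Γ),
        ¬ SameEdgeInterior Γ p' q' ∧
        ∀ z, B z = unitDiv Γ p' z + unitDiv Γ q' z + ratDiv g z := by
      rcases le_total a b with h | h
      · obtain ⟨p', q', g, hn, hg⟩ := spread Γ e a b ha.1 h hb.2
        refine ⟨p', q', g, hn, fun z => ?_⟩
        rw [hpq, ← hg, ptAt_int Γ e a ha, ptAt_int Γ e b hb]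
      · obtain ⟨p', q', g, hn, hg⟩ := spread Γ e b a hb.1 h ha.2
        refine ⟨p', q', g, hn, fun z => ?_⟩
        rw [hpq, ← hg, ptAt_int Γ e a ha, ptAt_int Γ e b hb, add_comm]
    refine ⟨_, ⟨ratComb f 1 g, fun z => ?_⟩, p', q', rfl, hn⟩
    rw [ratDiv_comb]
    have := hf z
    have := hg z
    linarith
  · refine ⟨_, ⟨f, fun z => ?_⟩, p, q, rfl, hs⟩
    have := hf z
    have := hpq z
    linarith

/-! ### Assembly -/

lemma consec_in_finset (F : Finset ℝ) (P : ℝ → Prop) (a b : ℝ) (ha : a ∈ F) (hb : b ∈ F)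
    (hab : a < b) (hP : ¬ (P a ↔ P b)) :
    ∃ s ∈ F, ∃ t ∈ F, s < t ∧ ¬ (P s ↔ P t) ∧ ∀ r ∈ F, ¬ (s < r ∧ r < t) := by
  have h1 : (F.filter fun u => a < u ∧ ¬ (P a ↔ P u)).Nonempty :=
    ⟨b, Finset.mem_filter.2 ⟨hb, hab, hP⟩⟩
  obtain ⟨t, ht, htmin⟩ := Finset.exists_min_image _ id h1
  obtain ⟨htF, hat, hPt⟩ := Finset.mem_filter.1 ht
  have h2 : (F.filter fun u => u < t).Nonempty := ⟨a, Finset.mem_filter.2 ⟨ha, hat⟩⟩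
  obtain ⟨s, hs, hsmax⟩ := Finset.exists_max_image _ id h2
  obtain ⟨hsF, hst⟩ := Finset.mem_filter.1 hs
  refine ⟨s, hsF, t, htF, hst, ?_, ?_⟩
  · have has : a ≤ s := hsmax a (Finset.mem_filter.2 ⟨ha, hat⟩)
    rcases has.eq_or_lt with h | h
    · rwa [← h]
    · intro hc
      have : t ≤ s := htmin s (Finset.mem_filter.2 ⟨hsF, h, by tauto⟩)
      linarith
  · rintro r hr ⟨h3, h4⟩
    have : r ≤ s := hsmax r (Finset.mem_filter.2 ⟨hr, h4⟩)
    linarith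

lemma liesOn_ptAt (Γ : MetricGraphModel) (e : Γ.E) (s : ℝ) (h0 : 0 ≤ s) (h1 : s ≤ Γ.len e) :
    LiesOn Γ e (ptAt Γ e s) s := by
  rcases h0.eq_or_lt with h | h
  · subst h; exact Or.inl ⟨ptAt_zero Γ e, rfl⟩
  · rcases h1.eq_or_lt with h2 | h2
    · subst h2; exact Or.inr (Or.inl ⟨ptAt_len Γ e, rfl⟩)
    · exact Or.inr (Or.inr ⟨⟨h, h2⟩, ptAt_int Γ e s ⟨h, h2⟩⟩)

lemma liesOn_eq (Γ : MetricGraphModel) (e : Γ.E) (s : ℝ) (z : Γ.Pt) (h : LiesOn Γ e z s) :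
    z = ptAt Γ e s := by
  rcases h with ⟨rfl, rfl⟩ | ⟨rfl, rfl⟩ | ⟨h, rfl⟩
  · rw [ptAt_zero]
  · rw [ptAt_len]
  · rw [ptAt_int]

lemma ptAt_injOn (Γ : MetricGraphModel) (e : Γ.E) : Set.InjOn (ptAt Γ e) (Set.Ioo 0 (Γ.len e)) := by
  intro a ha b hb h
  rw [ptAt_int Γ e a ha, ptAt_int Γ e b hb] at h
  simp only [Sum.inr.injEq, Sigma.mk.injEq, heq_eq_eq, true_and] at h
  exact congrArg Subtype.val h

/-- On a `3`-edge connected metric graph whose canonical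
model has more than `3` vertices, for every `D ∈ W¹₃(Γ)` and every vertex `x`
there is a vertex `y` whose admissible representative is consecutive to the
one of `x`. -/
theorem exists_consecutive_admissible
    (Γ : MetricGraphModel) (hcan : Γ.IsCanonical) (h3ec : Γ.ThreeEdgeConnected)
    (hcard : 3 < Fintype.card Γ.V)
    (D : MetricGraphModel.Divisor Γ) (hfin : MetricGraphModel.DivFinSupp D)
    (hdeg : MetricGraphModel.divDegree D = 3) (hrk : MetricGraphModel.RankGE Γ D 1) :
    ∀ x : Γ.V, ∃ (y : Γ.V) (Dx Dy : MetricGraphModel.Divisor Γ),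
      AdmissibleRep Γ D x Dx ∧ AdmissibleRep Γ D y Dy ∧ Consecutive Γ D Dx Dy := by
  intro x
  choose R hR using admissible_exists D hfin hdeg hrk
  -- finiteness of the special points
  have hsuppfin : ∀ y, (Function.support (R y)).Finite := by
    intro y
    obtain ⟨-, p, q, h, -⟩ := hR y
    refine (Set.toFinite {Sum.inl y, p, q}).subset fun z hz => ?_
    by_contra hc
    simp only [Set.mem_insert_iff, Set.mem_singleton_iff, not_or] at hc
    apply hz
    rw [h]
    simp [unitDiv, hc.1, hc.2.1, hc.2.2]
  have hspec : {p | SpecialPt Γ D p}.Finite := by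
    refine ((Set.finite_range (Sum.inl : Γ.V → Γ.Pt)).union
      (Set.finite_iUnion hsuppfin)).subset ?_
    rintro p (⟨v, rfl⟩ | ⟨y, Dy, hy, hp⟩)
    · exact Or.inl ⟨v, rfl⟩
    · refine Or.inr (Set.mem_iUnion.2 ⟨y, ?_⟩)
      rw [admissible_unique h3ec D y _ _ (hR y) hy]
      exact hp
  have hxx : ∀ y, R y (Sum.inl y) ≠ 0 := by
    intro y
    obtain ⟨-, p, q, h, -⟩ := hR y
    rw [h]
    have := unit_nonneg Γ p (Sum.inl y)
    have := unit_nonneg Γ q (Sum.inl y)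
    have : unitDiv Γ (Sum.inl y) (Sum.inl y) = 1 := by simp [unitDiv]
    dsimp only
    linarith
  -- a vertex outside of the support
  obtain ⟨v, hv⟩ : ∃ v, R x (Sum.inl v) = 0 := by
    by_contra hc
    push Not at hc
    obtain ⟨-, p, q, h, -⟩ := hR x
    have hsub : (Finset.univ.image (Sum.inl : Γ.V → Γ.Pt)) ⊆ {Sum.inl x, p, q} := by
      intro z hz
      obtain ⟨v, -, rfl⟩ := Finset.mem_image.1 hz
      by_contra hz'
      simp only [Finset.mem_insert, Finset.mem_singleton, not_or] at hz'
      apply hc v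
      rw [h]
      simp only [unitDiv, if_neg hz'.1, if_neg hz'.2.1, if_neg hz'.2.2]
      norm_num
    have h1 := Finset.card_le_card hsub
    rw [Finset.card_image_of_injective _ Sum.inl_injective, Finset.card_univ] at h1
    have h2 : ({Sum.inl x, p, q} : Finset Γ.Pt).card ≤ 3 := Finset.card_le_three
    omega
  obtain ⟨L, hL⟩ := hcan.1.2 x v
  obtain ⟨⟨e, bb⟩, -, he⟩ := walk_cross (fun w => R x (Sum.inl w) ≠ 0) L x v hL (hxx x)
    (by simpa using hv)
  dsimp only at he
  have hlen := Γ.len_pos e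
  -- special parameters on the edge
  have hF : {s | 0 ≤ s ∧ s ≤ Γ.len e ∧ SpecialPt Γ D (ptAt Γ e s)}.Finite := by
    have h1 : (Set.Ioo 0 (Γ.len e) ∩ {s | SpecialPt Γ D (ptAt Γ e s)}).Finite :=
      Set.Finite.of_finite_image (f := ptAt Γ e)
        (hspec.subset (by rintro _ ⟨s, hs, rfl⟩; exact hs.2))
        ((ptAt_injOn Γ e).mono Set.inter_subset_left)
    refine (h1.union (Set.toFinite {0, Γ.len e})).subset ?_
    rintro s ⟨h0, h1, h2⟩
    rcases h0.eq_or_lt with h | h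
    · exact Or.inr (Or.inl h.symm)
    · rcases h1.eq_or_lt with h' | h'
      · exact Or.inr (Or.inr h')
      · exact Or.inl ⟨⟨h, h'⟩, h2⟩
  obtain ⟨s, hs, t, ht, hst, hP, hr⟩ := consec_in_finset hF.toFinset
    (fun s => R x (ptAt Γ e s) ≠ 0) 0 (Γ.len e)
    (hF.mem_toFinset.2 ⟨le_rfl, hlen.le, Or.inl ⟨_, ptAt_zero Γ e⟩⟩)
    (hF.mem_toFinset.2 ⟨hlen.le, le_rfl, Or.inl ⟨_, ptAt_len Γ e⟩⟩) hlen
    (by rw [ptAt_zero, ptAt_len]; exact he)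
  obtain ⟨hs0, hsL, hsS⟩ := hF.mem_toFinset.1 hs
  obtain ⟨ht0, htL, htS⟩ := hF.mem_toFinset.1 ht
  have hempty : ∀ r, s < r → r < t → ∀ z, LiesOn Γ e z r → ¬ SpecialPt Γ D z := by
    intro r h1 h2 z hz hS
    rw [liesOn_eq Γ e r z hz] at hS
    exact hr r (hF.mem_toFinset.2 ⟨by linarith, by linarith, hS⟩) ⟨h1, h2⟩
  have hY : ∀ p, SpecialPt Γ D p → ∃ y, R y p ≠ 0 := by
    rintro p (⟨w, rfl⟩ | ⟨y, Dy, hy, hp⟩)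
    · exact ⟨w, hxx w⟩
    · refine ⟨y, ?_⟩
      rwa [admissible_unique h3ec D y _ _ (hR y) hy]
  by_cases h1 : R x (ptAt Γ e s) = 0
  · have h2 : R x (ptAt Γ e t) ≠ 0 := by
      intro h2; exact hP (by simp [h1, h2])
    obtain ⟨y, hy⟩ := hY _ hsS
    refine ⟨y, R x, R y, hR x, hR y, fun h => hy (h ▸ h1), e, s, t, hst, _, _,
      liesOn_ptAt Γ e s hs0 hsL, liesOn_ptAt Γ e t ht0 htL, Or.inr ⟨hy, h2⟩, hempty⟩
  · have h2 : R x (ptAt Γ e t) = 0 := by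
      by_contra h2; exact hP (by simp [h1, h2])
    obtain ⟨y, hy⟩ := hY _ htS
    refine ⟨y, R x, R y, hR x, hR y, fun h => hy (h ▸ h2), e, s, t, hst, _, _,
      liesOn_ptAt Γ e s hs0 hsL, liesOn_ptAt Γ e t ht0 htL, Or.inl ⟨h1, hy⟩, hempty⟩
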